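/- arXiv:1006.4318 — 4 statements merged into one kernel-verified Lean document; each statement's English description precedes it below -/
import Mathlib

section
/- There exists a constant A < ∞ such that for every α ∈ (0,1) and all h₁, h₂, h₃ ∈ Λ_α(S²), ‖(h₁σ*h₂σ*h₃σ)|_{S²}‖_{Λ_α} ≤ A ‖h₁‖_{Λ_α} ‖h₂‖_{Λ_α} ‖h₃‖_{Λ_α}. -/
open MeasureTheory Metric Filter
open scoped ENNReal RealInnerProductSpace

noncomputable section

/-- `ℝ³`, i.e. three-dimensional Euclidean space. -/
abbrev E3 : Type := EuclideanSpace ℝ (Fin 3)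

/-- The unit sphere `S² ⊂ ℝ³`. -/
def sph : Set E3 := Metric.sphere 0 1

/-- Surface measure `σ` on the unit sphere `S²`, realized as the two-dimensional
Hausdorff measure on `ℝ³` restricted to the sphere. -/
def sphMeasure : Measure E3 := (μH[2]).restrict sph

/-- `Q` is (a representative of) the density, with respect to Lebesgue measure on `ℝ³`,
of the convolution `fσ * gσ` of the two finite measures `f dσ` and `g dσ`:
`Q ∈ L¹(ℝ³)` and `∫ φ Q = ∬ φ(x+y) f(x) g(y) dσ dσ` for all test functions `φ`. -/
def IsConvPairDensity (f g Q : E3 → ℂ) : Prop :=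
  Integrable Q volume ∧
  ∀ φ : E3 → ℂ, Continuous φ → HasCompactSupport φ →
    ∫ z, φ z * Q z = ∫ x, ∫ y, φ (x + y) * (f x * g y) ∂sphMeasure ∂sphMeasure

/-- The Hölder norm of order `α` of a function on the sphere:
`sup_{S²} |f| + sup_{x ≠ x' ∈ S²} |x-x'|^{-α} |f(x)-f(x')|` (valued in `ℝ≥0∞`;
`f ∈ Λ_α(S²)` iff this is finite). -/
def holderNormE (α : ℝ) (f : E3 → ℂ) : ℝ≥0∞ :=
  (⨆ x : sph, ENNReal.ofReal ‖f x.1‖) +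
    ⨆ (x : sph) (y : sph), ENNReal.ofReal (‖f x.1 - f y.1‖ / ‖x.1 - y.1‖ ^ α)

/-- The group of linear isometries of `ℝ³` carries a right-invariant probability measure. -/
lemma exists_rightInvariant_measure :
    ∃ (G : Type) (_ : MeasurableSpace G) (m : Measure G) (ρ : G → (E3 ≃ₗᵢ[ℝ] E3)),
      IsProbabilityMeasure m ∧ Measurable (fun p : G × E3 => ρ p.1 p.2) ∧
      ∀ (R : E3 ≃ₗᵢ[ℝ] E3) (F : (E3 ≃ₗᵢ[ℝ] E3) → ℝ≥0∞),
        ∫⁻ g, F (ρ g * R) ∂m = ∫⁻ g, F (ρ g) ∂m := by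
  let G := unitary (E3 →L[ℝ] E3)
  let _ : MeasurableSpace G := borel G
  have : BorelSpace G := ⟨rfl⟩
  have : ContinuousStar (E3 →L[ℝ] E3) :=
    ⟨(ContinuousLinearMap.adjoint (𝕜 := ℝ) (E := E3) (F := E3)).continuous⟩
  have : ProperSpace (E3 →L[ℝ] E3) := FiniteDimensional.proper ℝ _
  have : CompactSpace G := by
    refine isCompact_iff_compactSpace.mp ?_
    refine Metric.isCompact_of_isClosed_isBounded (isClosed_unitary) ?_
    refine (Metric.isBounded_iff_subset_closedBall 0).2 ⟨1, fun u hu => ?_⟩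
    rw [mem_closedBall_zero_iff]
    refine ContinuousLinearMap.opNorm_le_bound _ zero_le_one fun x => ?_
    rw [one_mul]
    exact (Unitary.norm_map ⟨u, hu⟩ x).le
  have : SecondCountableTopology (E3 →L[ℝ] E3) := inferInstance
  have : SecondCountableTopology G := TopologicalSpace.Subtype.secondCountableTopology _
  let m₀ : Measure G := Measure.haarMeasure ⊤
  have : IsProbabilityMeasure m₀ := ⟨by
    simpa using Measure.haarMeasure_self (K₀ := (⊤ : TopologicalSpace.PositiveCompacts G))⟩
  refine ⟨G, inferInstance, m₀.inv, Unitary.linearIsometryEquiv, ⟨?_⟩, ?_, ?_⟩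
  · rw [Measure.inv_apply]; simp
  · have : Continuous (fun p : G × E3 => (p.1 : E3 →L[ℝ] E3) p.2) := by fun_prop
    exact this.measurable
  · intro R F
    have := lintegral_mul_right_eq_self (μ := m₀.inv)
      (fun g : G => F (Unitary.linearIsometryEquiv g)) (Unitary.linearIsometryEquiv.symm R)
    simpa using this

/-- Two pairs of unit vectors with the same inner product are related by a linear isometry. -/
lemma exists_isometry_of_inner_eq {x y x' y' : E3} (hx : ‖x‖ = 1) (hy : ‖y‖ = 1)
    (hx' : ‖x'‖ = 1) (hy' : ‖y'‖ = 1) (h : ⟪x, y⟫ = ⟪x', y'⟫) :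
    ∃ R : E3 ≃ₗᵢ[ℝ] E3, R x = x' ∧ R y = y' := by
  set S := (ℝ ∙ (x - x'))ᗮ.reflection with hS
  have h1 : S x = x' := Submodule.reflection_sub (hx.trans hx'.symm)
  set T := (ℝ ∙ (S y - y'))ᗮ.reflection with hT
  have h2 : T (S y) = y' := Submodule.reflection_sub (by simp [hy, hy'])
  have h3 : T x' = x' := by
    apply Submodule.reflection_mem_subspace_eq_self
    rw [Submodule.mem_orthogonal_singleton_iff_inner_right, inner_sub_left, sub_eq_zero,
      real_inner_comm, ← h1, LinearIsometryEquiv.inner_map_map, h, h1, real_inner_comm]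
  exact ⟨S.trans T, by simp [h1, h3], by simp [h2]⟩

/-- A measure on pairs of unit vectors that is invariant under linear isometries is determined
by the law of the inner product. -/
lemma lintegral_eq_of_map_inner_eq {M N : Measure (E3 × E3)} [IsFiniteMeasure M]
    [IsFiniteMeasure N]
    (hM : ∀ R : E3 ≃ₗᵢ[ℝ] E3, M.map (Prod.map R R) = M)
    (hN : ∀ R : E3 ≃ₗᵢ[ℝ] E3, N.map (Prod.map R R) = N)
    (hM1 : ∀ᵐ p ∂M, ‖p.1‖ = 1 ∧ ‖p.2‖ = 1) (hN1 : ∀ᵐ p ∂N, ‖p.1‖ = 1 ∧ ‖p.2‖ = 1)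
    (h : M.map (fun p => ⟪p.1, p.2⟫) = N.map (fun p => ⟪p.1, p.2⟫)) : M = N := by
  obtain ⟨G, _, m, ρ, _, hρ, hinv⟩ := exists_rightInvariant_measure
  let s : ℝ → E3 × E3 := fun t => (!₂[1, 0, 0], !₂[t, √(1 - t ^ 2), 0])
  have hs : Measurable s := by
    have : Continuous s := by
      refine continuous_const.prodMk ?_
      refine (PiLp.continuous_toLp 2 _).comp (continuous_pi fun i => ?_)
      fin_cases i <;> simp <;> fun_prop
    exact this.measurable
  have hq : Measurable (fun p : E3 × E3 => ⟪p.1, p.2⟫) := by fun_prop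
  have hm : Measurable fun z : G × (E3 × E3) => (ρ z.1 z.2.1, ρ z.1 z.2.2) :=
    (hρ.comp (measurable_fst.prodMk measurable_snd.fst)).prodMk
      (hρ.comp (measurable_fst.prodMk measurable_snd.snd))
  have key : ∀ K : Measure (E3 × E3), IsFiniteMeasure K →
      (∀ R : E3 ≃ₗᵢ[ℝ] E3, K.map (Prod.map R R) = K) →
      (∀ᵐ p ∂K, ‖p.1‖ = 1 ∧ ‖p.2‖ = 1) → ∀ F : E3 × E3 → ℝ≥0∞, Measurable F →
      ∫⁻ p, F p ∂K = ∫⁻ t, (∫⁻ g, F (ρ g (s t).1, ρ g (s t).2) ∂m)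
        ∂(K.map (fun p => ⟪p.1, p.2⟫)) := by
    intro K _ hK hK1 F hF
    have hFm : Measurable fun z : G × (E3 × E3) => F (ρ z.1 z.2.1, ρ z.1 z.2.2) := hF.comp hm
    have hA : Measurable fun p : E3 × E3 => ∫⁻ g, F (ρ g p.1, ρ g p.2) ∂m :=
      hFm.lintegral_prod_left'
    calc ∫⁻ p, F p ∂K = ∫⁻ _ : G, ∫⁻ p, F p ∂K ∂m := by simp
      _ = ∫⁻ g, ∫⁻ p, F (ρ g p.1, ρ g p.2) ∂K ∂m := by
        refine lintegral_congr fun g => ?_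
        conv_lhs => rw [← hK (ρ g)]
        rw [lintegral_map hF (by fun_prop)]
        rfl
      _ = ∫⁻ p, ∫⁻ g, F (ρ g p.1, ρ g p.2) ∂m ∂K := lintegral_lintegral_swap hFm.aemeasurable
      _ = ∫⁻ p, ∫⁻ g, F (ρ g (s ⟪p.1, p.2⟫).1, ρ g (s ⟪p.1, p.2⟫).2) ∂m ∂K := by
        refine lintegral_congr_ae (hK1.mono fun p hp => ?_)
        have ht : ⟪p.1, p.2⟫ ^ 2 ≤ 1 := by
          have := abs_real_inner_le_norm p.1 p.2
          rw [hp.1, hp.2, one_mul] at this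
          exact (sq_le_one_iff_abs_le_one _).2 this
        obtain ⟨R, hR1, hR2⟩ := exists_isometry_of_inner_eq (x := p.1) (y := p.2)
          (x' := (s ⟪p.1, p.2⟫).1) (y' := (s ⟪p.1, p.2⟫).2) hp.1 hp.2
          (by simp [s, EuclideanSpace.norm_eq, Fin.sum_univ_three])
          (by simp [s, EuclideanSpace.norm_eq, Fin.sum_univ_three,
            Real.sq_sqrt (sub_nonneg.2 ht)])
          (by simp [s, PiLp.inner_apply, Fin.sum_univ_three])
        beta_reduce
        rw [← hR1, ← hR2]
        exact (hinv R fun T => F (T p.1, T p.2)).symm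
      _ = _ := by
        rw [lintegral_map (f := fun t => ∫⁻ g, F (ρ g (s t).1, ρ g (s t).2) ∂m)
          (hA.comp hs) hq]
  refine Measure.ext_of_lintegral _ fun F hF => ?_
  rw [key M ‹_› hM hM1 F hF, key N ‹_› hN hN1 F hF, h]

/-- The sphere has finite two-dimensional Hausdorff measure. -/
lemma hausdorffMeasure_sph_lt_top : μH[2] sph < ⊤ := by
  let f : ℝ × ℝ → E3 := fun a =>
    !₂[Real.sin a.1 * Real.cos a.2, Real.sin a.1 * Real.sin a.2, Real.cos a.1]
  have hf : ContDiff ℝ 1 f := by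
    rw [contDiff_euclidean]
    intro i
    fin_cases i <;> simp [f] <;> fun_prop
  have hK : IsCompact (closedBall (0 : ℝ × ℝ) 4) := isCompact_closedBall _ _
  obtain ⟨K, hKf⟩ := hf.contDiffOn.exists_lipschitzOnWith one_ne_zero
    (convex_closedBall (0 : ℝ × ℝ) 4) hK
  have hsub : sph ⊆ f '' closedBall (0 : ℝ × ℝ) 4 := by
    intro x hx
    have hx1 : x 0 ^ 2 + x 1 ^ 2 + x 2 ^ 2 = 1 := by
      have : ‖x‖ = 1 := by simpa [sph] using hx
      have h2 : ‖x‖ ^ 2 = 1 := by rw [this, one_pow]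
      simpa [EuclideanSpace.norm_sq_eq, Fin.sum_univ_three] using h2
    let z : ℂ := ⟨x 0, x 1⟩
    have hz : ‖z‖ = Real.sin (Real.arccos (x 2)) := by
      rw [Real.sin_arccos, Complex.norm_def, Complex.normSq_apply]
      congr 1
      simp only [z]
      linarith
    refine ⟨(Real.arccos (x 2), z.arg), ?_, ?_⟩
    · rw [mem_closedBall_zero_iff, Prod.norm_def, max_le_iff]
      have hpi := Real.pi_le_four
      refine ⟨?_, ?_⟩
      · rw [Real.norm_of_nonneg (Real.arccos_nonneg _)]
        exact (Real.arccos_le_pi _).trans hpi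
      · exact (Complex.abs_arg_le_pi _).trans hpi
    · ext i
      fin_cases i
      · simp [f, ← hz, Complex.norm_mul_cos_arg, z]
      · simp [f, ← hz, Complex.norm_mul_sin_arg, z]
      · simp only [f]
        exact Real.cos_arccos (by nlinarith) (by nlinarith)
  refine (measure_mono hsub).trans_lt ((hKf.hausdorffMeasure_image_le zero_le_two).trans_lt ?_)
  rw [hausdorffMeasure_prod_real]
  exact ENNReal.mul_lt_top (by simp) hK.measure_lt_top

instance : IsFiniteMeasure sphMeasure := ⟨by
  rw [sphMeasure, Measure.restrict_apply_univ]; exact hausdorffMeasure_sph_lt_top⟩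

lemma measurableSet_sph : MeasurableSet sph := isClosed_sphere.measurableSet

lemma ae_norm_eq_one : ∀ᵐ x ∂sphMeasure, ‖x‖ = 1 := by
  filter_upwards [ae_restrict_mem measurableSet_sph] with x hx
  simpa [sph] using hx

lemma measurePreserving_sphMeasure (R : E3 ≃ₗᵢ[ℝ] E3) :
    MeasurePreserving R sphMeasure sphMeasure := by
  have h := (R.toIsometryEquiv.measurePreserving_hausdorffMeasure 2).restrict_preimage
    measurableSet_sph
  have h2 : R.toIsometryEquiv ⁻¹' sph = sph := by ext; simp [sph]
  rwa [h2] at h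

/-- Under Lebesgue measure on the plane, the squared distance to the origin has law `π ds`. -/
lemma lintegral_sq_add_sq {g : ℝ → ℝ≥0∞} (hg : Measurable g) :
    ∫⁻ p : ℝ × ℝ, g (p.1 ^ 2 + p.2 ^ 2) = ENNReal.ofReal Real.pi * ∫⁻ s in Set.Ioi 0, g s := by
  have himg : (fun r : ℝ => r ^ 2) '' Set.Ioi 0 = Set.Ioi 0 := by
    ext s
    constructor
    · rintro ⟨r, hr, rfl⟩
      exact pow_pos (Set.mem_Ioi.1 hr) 2
    · intro hs
      exact ⟨√s, Real.sqrt_pos.2 hs, Real.sq_sqrt (le_of_lt hs)⟩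
  have hsub := lintegral_image_eq_lintegral_abs_deriv_mul (s := Set.Ioi 0)
    (f := fun r : ℝ => r ^ 2) (f' := fun r => 2 * r) measurableSet_Ioi
    (fun r _ => by simpa using (hasDerivAt_pow 2 r).hasDerivWithinAt)
    (fun a ha b hb hab => by
      exact (pow_left_inj₀ (le_of_lt ha) (le_of_lt hb) two_ne_zero).1 hab) g
  rw [himg] at hsub
  rw [← lintegral_comp_polarCoord_symm, hsub]
  have h1 : ∀ p : ℝ × ℝ, ENNReal.ofReal p.1 •
      g ((polarCoord.symm p).1 ^ 2 + (polarCoord.symm p).2 ^ 2)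
      = ENNReal.ofReal p.1 * g (p.1 ^ 2) := by
    intro p
    have : (polarCoord.symm p).1 ^ 2 + (polarCoord.symm p).2 ^ 2 = p.1 ^ 2 := by
      simp only [polarCoord_symm_apply]
      linear_combination p.1 ^ 2 * Real.cos_sq_add_sin_sq p.2
    rw [this, smul_eq_mul]
  simp_rw [h1, polarCoord_target]
  rw [Measure.volume_eq_prod, setLIntegral_prod _ (by fun_prop)]
  simp only [lintegral_const, Measure.restrict_apply_univ, Real.volume_Ioo]
  rw [lintegral_mul_const _ (by fun_prop), mul_comm, sub_neg_eq_add, ← two_mul,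
    ENNReal.ofReal_mul zero_le_two, mul_comm (ENNReal.ofReal 2), mul_assoc,
    ← lintegral_const_mul _ (by fun_prop)]
  congr 1
  refine setLIntegral_congr_fun measurableSet_Ioi fun r hr => ?_
  rw [abs_of_pos (mul_pos two_pos hr), ENNReal.ofReal_mul zero_le_two, mul_assoc]

/-- Integration in `ℝ³` in terms of the normalized height and the squared norm. -/
lemma lintegral_height_normSq {G : ℝ × ℝ → ℝ≥0∞} (hG : Measurable G) :
    ∫⁻ y : E3, G (y 0 / ‖y‖, ‖y‖ ^ 2) = ENNReal.ofReal Real.pi *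
      ∫⁻ q in Set.Ioi 0, ENNReal.ofReal √q * ∫⁻ t in Set.Ioo (-1) 1, G (t, q) := by
  have hnorm : ∀ y : E3, ‖y‖ = √(y 0 ^ 2 + (y 1 ^ 2 + y 2 ^ 2)) := fun y => by
    simp [EuclideanSpace.norm_eq, Fin.sum_univ_three, add_assoc]
  let H : ℝ × ℝ → ℝ≥0∞ := fun p => G (p.1 / √(p.1 ^ 2 + p.2), p.1 ^ 2 + p.2)
  have hH : Measurable H := by fun_prop
  have h1 : ∫⁻ y : E3, G (y 0 / ‖y‖, ‖y‖ ^ 2)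
      = ∫⁻ v : Fin 3 → ℝ, H (v 0, v 1 ^ 2 + v 2 ^ 2) := by
    rw [← (PiLp.volume_preserving_ofLp (Fin 3)).lintegral_comp (by fun_prop)]
    refine lintegral_congr fun y => ?_
    simp only [H]
    rw [hnorm y, Real.sq_sqrt (by positivity)]
  have h2 : ∫⁻ v : Fin 3 → ℝ, H (v 0, v 1 ^ 2 + v 2 ^ 2)
      = ∫⁻ p : ℝ × (Fin 2 → ℝ), H (p.1, p.2 0 ^ 2 + p.2 1 ^ 2) := by
    rw [← (volume_preserving_piFinSuccAbove (fun _ : Fin 3 => ℝ) 0).lintegral_comp (by fun_prop)]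
    rfl
  have h3 : ∀ a : ℝ, ∫⁻ v : Fin 2 → ℝ, H (a, v 0 ^ 2 + v 1 ^ 2)
      = ENNReal.ofReal Real.pi * ∫⁻ s in Set.Ioi 0, H (a, s) := by
    intro a
    rw [← lintegral_sq_add_sq (by fun_prop),
      ← (volume_preserving_finTwoArrow ℝ).lintegral_comp (by fun_prop)]
    rfl
  have h4 : ∀ a : ℝ, ∫⁻ s in Set.Ioi 0, H (a, s)
      = ∫⁻ q, (Set.Ioi (a ^ 2)).indicator (fun q => G (a / √q, q)) q := by
    intro a
    rw [← lintegral_indicator measurableSet_Ioi,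
      ← lintegral_add_right_eq_self
        (fun q => (Set.Ioi (a ^ 2)).indicator (fun q => G (a / √q, q)) q) (a ^ 2)]
    refine lintegral_congr fun s => ?_
    simp [Set.indicator, H, add_comm]
  have h5 : ∀ q : ℝ, ∫⁻ a, (Set.Ioi (a ^ 2)).indicator (fun q => G (a / √q, q)) q
      = (Set.Ioi 0).indicator
          (fun q => ENNReal.ofReal √q * ∫⁻ t in Set.Ioo (-1) 1, G (t, q)) q := by
    intro q
    by_cases hq : 0 < q
    · have hq' : 0 < √q := Real.sqrt_pos.2 hq
      rw [Set.indicator_of_mem (Set.mem_Ioi.2 hq)]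
      have himg : (fun t : ℝ => √q * t) '' Set.Ioo (-1) 1 = {a | a ^ 2 < q} := by
        rw [Set.image_mul_left_Ioo hq']
        ext a
        simp [Real.sq_lt]
      have hsub := lintegral_image_eq_lintegral_abs_deriv_mul (s := Set.Ioo (-1 : ℝ) 1)
        (f := fun t : ℝ => √q * t) (f' := fun _ => √q) measurableSet_Ioo
        (fun t _ => by simpa using ((hasDerivAt_id t).const_mul √q).hasDerivWithinAt)
        (fun a _ b _ hab => mul_left_cancel₀ hq'.ne' hab) (fun a => G (a / √q, q))
      have hms : MeasurableSet {a : ℝ | a ^ 2 < q} :=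
        measurableSet_lt (by fun_prop) measurable_const
      rw [himg, ← lintegral_indicator hms] at hsub
      rw [← lintegral_const_mul _ (by fun_prop)]
      calc _ = _ := lintegral_congr fun a => by simp [Set.indicator]
        _ = _ := hsub
        _ = _ := by simp [abs_of_pos hq', mul_div_cancel_left₀ _ hq'.ne']
    · rw [Set.indicator_of_notMem (by simpa using hq)]
      refine (lintegral_congr fun a => Set.indicator_of_notMem ?_ _).trans (lintegral_zero)
      simp only [Set.mem_Ioi, not_lt]
      nlinarith [sq_nonneg a]
  rw [h1, h2, Measure.volume_eq_prod, lintegral_prod _ (by fun_prop)]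
  simp_rw [h3, h4]
  have hm : Measurable (Function.uncurry fun a q : ℝ =>
      (Set.Ioi (a ^ 2)).indicator (fun q => G (a / √q, q)) q) := by
    have : (Function.uncurry fun a q : ℝ =>
        (Set.Ioi (a ^ 2)).indicator (fun q => G (a / √q, q)) q)
        = {p : ℝ × ℝ | p.1 ^ 2 < p.2}.indicator (fun p => G (p.1 / √p.2, p.2)) := by
      ext p; simp [Function.uncurry, Set.indicator]
    rw [this]
    exact Measurable.indicator (by fun_prop) (measurableSet_lt (by fun_prop) (by fun_prop))
  rw [lintegral_const_mul _ hm.lintegral_prod_right, lintegral_lintegral_swap hm.aemeasurable]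
  simp_rw [h5]
  rw [lintegral_indicator measurableSet_Ioi]

/-- Lebesgue measure on the unit ball of `ℝ³`. -/
def ballMeasure : Measure E3 := volume.restrict (ball 0 1)

instance : IsFiniteMeasure ballMeasure := by
  unfold ballMeasure; exact isFiniteMeasure_restrict.2 measure_ball_lt_top.ne

lemma measurePreserving_ballMeasure (R : E3 ≃ₗᵢ[ℝ] E3) :
    MeasurePreserving R ballMeasure ballMeasure := by
  have h := R.measurePreserving.restrict_preimage (measurableSet_ball (x := (0 : E3)) (ε := 1))
  have h2 : R ⁻¹' ball 0 1 = ball 0 1 := by ext; simp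
  rwa [h2] at h

lemma ballMeasure_univ_pos : 0 < ballMeasure Set.univ := by
  rw [ballMeasure, Measure.restrict_apply_univ]
  exact measure_ball_pos _ _ one_pos

lemma ballMeasure_real_univ_pos : 0 < ballMeasure.real Set.univ :=
  ENNReal.toReal_pos ballMeasure_univ_pos.ne' (measure_ne_top _ _)

/-- Up to scaling, a finite measure on the sphere that is invariant under linear isometries is
unique. -/
lemma smul_eq_smul_of_invariant {μ ν : Measure E3} [IsFiniteMeasure μ] [IsFiniteMeasure ν]
    (hμ : ∀ R : E3 ≃ₗᵢ[ℝ] E3, μ.map R = μ) (hν : ∀ R : E3 ≃ₗᵢ[ℝ] E3, ν.map R = ν)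
    (hμ1 : ∀ᵐ x ∂μ, ‖x‖ = 1) (hν1 : ∀ᵐ x ∂ν, ‖x‖ = 1) :
    ν Set.univ • μ = μ Set.univ • ν := by
  have hd : Measurable fun x : E3 => (x, x) := by fun_prop
  have hinv : ∀ (τ : Measure E3) (c : ℝ≥0∞), (∀ R : E3 ≃ₗᵢ[ℝ] E3, τ.map R = τ) →
      ∀ R : E3 ≃ₗᵢ[ℝ] E3, ((c • τ).map fun x => (x, x)).map (Prod.map R R)
        = (c • τ).map fun x => (x, x) := by
    intro τ c hτ R
    rw [Measure.map_map (by fun_prop) hd]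
    conv_rhs => rw [← hτ R, ← Measure.map_smul, Measure.map_map hd (by fun_prop)]
    rfl
  have hone : ∀ (τ : Measure E3) (c : ℝ≥0∞), (∀ᵐ x ∂τ, ‖x‖ = 1) →
      ∀ᵐ p ∂((c • τ).map fun x => (x, x)), ‖p.1‖ = 1 ∧ ‖p.2‖ = 1 := by
    intro τ c hτ
    rw [ae_map_iff hd.aemeasurable (by measurability)]
    exact Measure.ae_smul_measure (hτ.mono fun x hx => ⟨hx, hx⟩) c
  have hlaw : ∀ (τ : Measure E3) (c : ℝ≥0∞), (∀ᵐ x ∂τ, ‖x‖ = 1) →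
      ((c • τ).map fun x => (x, x)).map (fun p => ⟪p.1, p.2⟫)
        = (c * τ Set.univ) • Measure.dirac 1 := by
    intro τ c hτ
    rw [Measure.map_map (by fun_prop) hd, Measure.map_smul,
      Measure.map_congr (g := fun _ => (1 : ℝ)) (hτ.mono fun x hx => by simp [hx]),
      Measure.map_const, smul_smul]
  have hfin : ∀ (τ τ' : Measure E3) [IsFiniteMeasure τ] [IsFiniteMeasure τ'],
      IsFiniteMeasure (τ' Set.univ • τ) := fun τ τ' _ _ =>
    Measure.smul_finite τ (measure_ne_top τ' _)
  have := hfin μ ν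
  have := hfin ν μ
  have key := lintegral_eq_of_map_inner_eq (hinv μ (ν Set.univ) hμ) (hinv ν (μ Set.univ) hν)
    (hone μ _ hμ1) (hone ν _ hν1) (by rw [hlaw μ _ hμ1, hlaw ν _ hν1, mul_comm])
  have h := congrArg (Measure.map Prod.fst) key
  rw [Measure.map_map measurable_fst hd, Measure.map_map measurable_fst hd] at h
  simpa [Function.comp_def] using h

/-- Archimedes' theorem: the height function on the sphere is uniformly distributed. -/
lemma lintegral_inner_sphMeasure {x : E3} (hx : ‖x‖ = 1) {k : ℝ → ℝ≥0∞} (hk : Measurable k) :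
    ∫⁻ y, k ⟪x, y⟫ ∂sphMeasure = sphMeasure Set.univ / 2 * ∫⁻ t in Set.Ioo (-1) 1, k t := by
  let e : E3 := EuclideanSpace.single 0 1
  have he : ‖e‖ = 1 := by simp [e]
  obtain ⟨R, hR, -⟩ := exists_isometry_of_inner_eq he he hx hx (by simp [he, hx])
  have hxe : ∫⁻ y, k ⟪x, y⟫ ∂sphMeasure = ∫⁻ y, k ⟪e, y⟫ ∂sphMeasure := by
    rw [← (measurePreserving_sphMeasure R).lintegral_comp (by fun_prop)]
    simp [← hR, LinearIsometryEquiv.inner_map_map]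
  let n : E3 → E3 := fun y => ‖y‖⁻¹ • y
  have hn : Measurable n := by fun_prop
  have hnR : ∀ R : E3 ≃ₗᵢ[ℝ] E3, (ballMeasure.map n).map R = ballMeasure.map n := by
    intro R
    rw [Measure.map_map (by fun_prop) hn]
    conv_rhs => rw [← (measurePreserving_ballMeasure R).map_eq, Measure.map_map hn (by fun_prop)]
    congr 1
    ext1 y
    simp [n]
  have hn1 : ∀ᵐ x ∂(ballMeasure.map n), ‖x‖ = 1 := by
    rw [ae_map_iff hn.aemeasurable (measurableSet_eq_fun (by fun_prop) (by fun_prop))]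
    have : ∀ᵐ y : E3 ∂ballMeasure, y ≠ 0 :=
      ae_restrict_of_ae (Measure.ae_ne volume (0 : E3))
    filter_upwards [this] with y hy
    simp [n, norm_smul, hy]
  have := Measure.isFiniteMeasure_map ballMeasure n
  have huniq := smul_eq_smul_of_invariant (fun R => (measurePreserving_sphMeasure R).map_eq) hnR
    ae_norm_eq_one hn1
  set C : ℝ≥0∞ := ENNReal.ofReal Real.pi *
    ∫⁻ q in Set.Ioi 0, ENNReal.ofReal √q * (Set.Iio 1).indicator 1 q with hC
  have hball : ∀ k : ℝ → ℝ≥0∞, Measurable k → ∫⁻ y, k ⟪e, y⟫ ∂(ballMeasure.map n)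
      = C * ∫⁻ t in Set.Ioo (-1) 1, k t := by
    intro k hk
    rw [lintegral_map (by fun_prop) hn, ballMeasure, ← lintegral_indicator measurableSet_ball]
    have hG : Measurable fun p : ℝ × ℝ => (Set.Iio (1 : ℝ)).indicator 1 p.2 * k p.1 :=
      ((measurable_const.indicator measurableSet_Iio).comp measurable_snd).mul
        (hk.comp measurable_fst)
    have h := lintegral_height_normSq hG
    have hi : Measurable fun q : ℝ => ENNReal.ofReal √q * (Set.Iio (1 : ℝ)).indicator 1 q :=
      Measurable.mul (by fun_prop) (measurable_const.indicator measurableSet_Iio)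
    simp only [lintegral_const_mul _ hk, ← mul_assoc] at h
    rw [lintegral_mul_const _ hi, ← mul_assoc] at h
    rw [hC, ← h]
    refine lintegral_congr fun y => ?_
    have h1 : ⟪e, n y⟫ = y 0 / ‖y‖ := by
      simp [e, n, EuclideanSpace.inner_single_left, div_eq_inv_mul]
    by_cases hy : ‖y‖ < 1
    · have : ‖y‖ ^ 2 < 1 := by nlinarith [norm_nonneg y]
      simp [Set.indicator, hy, this, h1]
    · have : ¬ ‖y‖ ^ 2 < 1 := by nlinarith [norm_nonneg y]
      simp [Set.indicator, hy, this]
  have hV : (ballMeasure.map n) Set.univ = C * 2 := by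
    have := hball (fun _ => 1) measurable_const
    simp only [lintegral_one] at this
    rw [this]
    norm_num
  have hpos : (ballMeasure.map n) Set.univ ≠ 0 := by
    rw [Measure.map_apply hn MeasurableSet.univ, Set.preimage_univ]
    exact ballMeasure_univ_pos.ne'
  have hC0 : C ≠ 0 := fun h => hpos (by rw [hV, h, zero_mul])
  have hCtop : C ≠ ⊤ := fun h => measure_ne_top (ballMeasure.map n) Set.univ
    (by rw [hV, h]; exact ENNReal.top_mul two_ne_zero)
  have h := congrArg (fun μ : Measure E3 => ∫⁻ y, k ⟪e, y⟫ ∂μ) huniq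
  simp only [lintegral_smul_measure, smul_eq_mul, hball k hk, hV] at h
  rw [hxe, ← ENNReal.mul_right_inj (a := C * 2) (mul_ne_zero hC0 two_ne_zero)
    (ENNReal.mul_ne_top hCtop ENNReal.ofNat_ne_top), h]
  rw [mul_assoc C, ← mul_assoc 2, ENNReal.mul_div_cancel two_ne_zero ENNReal.ofNat_ne_top]
  ring

/-- The component of `w` orthogonal to `z`. -/
def orthComponent (z w : E3) : E3 := w - (⟪z, w⟫ / ‖z‖ ^ 2) • z

/-- The point of the circle `{x ∈ S² : z - x ∈ S²}` in the half-plane spanned by `z` and `w`. -/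
def circlePoint (z w : E3) : E3 :=
  (1 / 2 : ℝ) • z + √(1 - ‖z‖ ^ 2 / 4) • (‖orthComponent z w‖⁻¹ • orthComponent z w)

/-- The density of `σ * σ`, divided by the mass of `ballMeasure`. -/
def convKernel (z : E3) : ℝ :=
  if ‖z‖ < 2 then
    sphMeasure.real Set.univ ^ 2 / (8 * Real.pi * ballMeasure.real Set.univ) / ‖z‖ else 0

lemma orthComponent_map (R : E3 ≃ₗᵢ[ℝ] E3) (z w : E3) :
    orthComponent (R z) (R w) = R (orthComponent z w) := by
  simp [orthComponent, LinearIsometryEquiv.inner_map_map]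

lemma circlePoint_map (R : E3 ≃ₗᵢ[ℝ] E3) (z w : E3) :
    circlePoint (R z) (R w) = R (circlePoint z w) := by
  simp [circlePoint, orthComponent_map]

lemma convKernel_map (R : E3 ≃ₗᵢ[ℝ] E3) (z : E3) : convKernel (R z) = convKernel z := by
  simp [convKernel]

lemma convKernel_nonneg (z : E3) : 0 ≤ convKernel z := by
  unfold convKernel
  split_ifs <;> positivity

lemma convKernel_ne_zero {z : E3} (h : convKernel z ≠ 0) : z ≠ 0 ∧ ‖z‖ < 2 := by
  by_contra hz
  refine h ?_
  rw [not_and_or, not_ne_iff] at hz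
  rcases hz with rfl | hz <;> simp_all [convKernel]

@[fun_prop]
lemma measurable_convKernel : Measurable convKernel := by
  refine Measurable.ite (measurableSet_lt (by fun_prop) (by fun_prop)) ?_ measurable_const
  fun_prop

@[fun_prop]
lemma measurable_circlePoint : Measurable fun p : E3 × E3 => circlePoint p.1 p.2 := by
  unfold circlePoint orthComponent
  fun_prop

lemma circlePoint_spec {z w : E3} (hz : z ≠ 0) (hz2 : ‖z‖ < 2) (hw : orthComponent z w ≠ 0) :
    ‖circlePoint z w‖ = 1 ∧ ‖z - circlePoint z w‖ = 1 ∧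
      ⟪circlePoint z w, z - circlePoint z w⟫ = ‖z‖ ^ 2 / 2 - 1 := by
  set u := ‖orthComponent z w‖⁻¹ • orthComponent z w with hu
  set r := √(1 - ‖z‖ ^ 2 / 4) with hr
  have hr2 : r ^ 2 = 1 - ‖z‖ ^ 2 / 4 := Real.sq_sqrt (by nlinarith [norm_nonneg z])
  have hu1 : ⟪u, u⟫ = 1 := by
    rw [real_inner_self_eq_norm_sq]
    simp [hu, norm_smul, hw]
  have hzu : ⟪z, u⟫ = 0 := by
    have : ‖z‖ ≠ 0 := norm_ne_zero_iff.2 hz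
    rw [hu, real_inner_smul_right, orthComponent, inner_sub_right, real_inner_smul_right,
      real_inner_self_eq_norm_sq]
    field_simp
    simp
  have huz : ⟪u, z⟫ = 0 := by rw [real_inner_comm, hzu]
  have hc : circlePoint z w = (1 / 2 : ℝ) • z + r • u := rfl
  have hc' : z - circlePoint z w = (1 / 2 : ℝ) • z - r • u := by rw [hc]; module
  have hsq : ∀ v : E3, ⟪v, v⟫ = 1 → ‖v‖ = 1 := fun v hv => by
    rw [real_inner_self_eq_norm_sq] at hv
    exact (pow_eq_one_iff_of_nonneg (norm_nonneg v) two_ne_zero).1 hv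
  rw [hc', hc]
  refine ⟨hsq _ ?_, hsq _ ?_, ?_⟩ <;>
  · simp only [inner_add_left, inner_add_right, inner_sub_left, inner_sub_right,
      real_inner_smul_left, real_inner_smul_right, hzu, huz, hu1, real_inner_self_eq_norm_sq z]
    linarith

lemma ae_orthComponent_ne_zero (z : E3) : ∀ᵐ w ∂ballMeasure, orthComponent z w ≠ 0 := by
  refine ae_restrict_of_ae ?_
  have hspan : volume ((ℝ ∙ z : Submodule ℝ E3) : Set E3) = 0 := by
    refine Measure.addHaar_submodule _ _ fun h => ?_
    have h1 := finrank_span_le_card (R := ℝ) ({z} : Set E3)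
    rw [h, finrank_top, finrank_euclideanSpace_fin] at h1
    simp at h1
  refine (measure_eq_zero_iff_ae_notMem.1 hspan).mono fun w hw h0 => hw ?_
  rw [orthComponent, sub_eq_zero] at h0
  rw [h0]
  exact Submodule.smul_mem _ _ (Submodule.mem_span_singleton_self z)

/-- The measure `convKernel z dz`. -/
def kernelMeasure : Measure E3 := volume.withDensity fun z => ENNReal.ofReal (convKernel z)

lemma lintegral_normSq_kernelMeasure {k : ℝ → ℝ≥0∞} (hk : Measurable k) :
    (∫⁻ z, k (‖z‖ ^ 2 / 2 - 1) ∂kernelMeasure) * ballMeasure Set.univ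
      = sphMeasure Set.univ * (sphMeasure Set.univ / 2 * ∫⁻ t in Set.Ioo (-1) 1, k t) := by
  set c := sphMeasure.real Set.univ ^ 2 / (8 * Real.pi * ballMeasure.real Set.univ) with hc
  have hc0 : 0 ≤ c := by positivity
  have h1 : ∫⁻ z, k (‖z‖ ^ 2 / 2 - 1) ∂kernelMeasure
      = ENNReal.ofReal (4 * Real.pi * c) * ∫⁻ t in Set.Ioo (-1) 1, k t := by
    rw [kernelMeasure, lintegral_withDensity_eq_lintegral_mul _ (by fun_prop) (by fun_prop)]
    have hG : Measurable fun p : ℝ × ℝ =>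
        (Set.Iio (4 : ℝ)).indicator (fun q => ENNReal.ofReal (c / √q) * k (q / 2 - 1)) p.2 :=
      (Measurable.indicator (by fun_prop) measurableSet_Iio).comp measurable_snd
    have h := lintegral_height_normSq hG
    have himg : (fun t : ℝ => 2 * t + 2) '' Set.Ioo (-1) 1 = Set.Ioo 0 4 := by
      ext q
      constructor
      · rintro ⟨t, ht, rfl⟩
        constructor <;> linarith [ht.1, ht.2]
      · intro hq
        exact ⟨q / 2 - 1, ⟨by linarith [hq.1], by linarith [hq.2]⟩, by ring⟩
    have hsub := lintegral_image_eq_lintegral_abs_deriv_mul (s := Set.Ioo (-1 : ℝ) 1)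
      (f := fun t : ℝ => 2 * t + 2) (f' := fun _ => 2) measurableSet_Ioo
      (fun t _ => by
        simpa using (((hasDerivAt_id t).const_mul 2).add_const (2 : ℝ)).hasDerivWithinAt)
      (fun a _ b _ hab => by simpa using hab) (fun q => k (q / 2 - 1))
    rw [himg] at hsub
    have hk2 : ∀ t : ℝ, k ((2 * t + 2) / 2 - 1) = k t := fun t => by congr 1; ring
    simp only [hk2, lintegral_const_mul _ hk] at hsub
    calc _ = _ := by
          refine lintegral_congr fun z => ?_
          rw [Pi.mul_apply]
          by_cases hz : ‖z‖ < 2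
          · have : ‖z‖ ^ 2 < 4 := by nlinarith [norm_nonneg z]
            simp [convKernel, hz, this, ← hc]
          · have : ¬ ‖z‖ ^ 2 < 4 := by nlinarith [norm_nonneg z]
            simp [convKernel, hz, this]
      _ = _ := h
      _ = ENNReal.ofReal Real.pi *
          ∫⁻ q in Set.Ioo 0 4, ENNReal.ofReal (2 * c) * k (q / 2 - 1) := by
        congr 1
        rw [← lintegral_indicator measurableSet_Ioi, ← lintegral_indicator measurableSet_Ioo]
        refine lintegral_congr fun q => ?_
        by_cases hq : 0 < q
        · by_cases hq4 : q < 4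
          · have hs : 0 < √q := Real.sqrt_pos.2 hq
            have hv : volume (Set.Ioo (-1 : ℝ) 1) = ENNReal.ofReal 2 := by norm_num
            simp only [Set.indicator, Set.mem_Ioi, Set.mem_Ioo, Set.mem_Iio, hq, hq4, and_self,
              if_true, lintegral_const, Measure.restrict_apply_univ, hv]
            rw [mul_right_comm _ _ (ENNReal.ofReal 2), ← mul_assoc, ← mul_assoc,
              ← ENNReal.ofReal_mul (by positivity), ← ENNReal.ofReal_mul (by positivity)]
            congr 2
            field_simp
          · simp [Set.indicator, hq4]
        · simp [Set.indicator, hq]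
      _ = _ := by
        rw [lintegral_const_mul _ (by fun_prop), hsub, abs_of_pos two_pos, ← mul_assoc,
          ← mul_assoc, ← ENNReal.ofReal_mul (by positivity), ← ENNReal.ofReal_mul (by positivity)]
        congr 2
        ring
  have hs : ENNReal.ofReal (sphMeasure.real Set.univ) = sphMeasure Set.univ := by simp
  have hb : ENNReal.ofReal (ballMeasure.real Set.univ) = ballMeasure Set.univ := by simp
  have hbpos := ballMeasure_real_univ_pos
  rw [h1, mul_right_comm, ← mul_assoc]
  congr 1
  have hs2 : sphMeasure Set.univ / 2 = ENNReal.ofReal (sphMeasure.real Set.univ / 2) := by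
    rw [ENNReal.ofReal_div_of_pos two_pos, hs, ENNReal.ofReal_ofNat]
  rw [hs2, ← hs, ← hb, ← ENNReal.ofReal_mul (by positivity),
    ← ENNReal.ofReal_mul (by positivity)]
  congr 1
  rw [hc]
  field_simp
  ring

instance : IsFiniteMeasure kernelMeasure := ⟨by
  have h := lintegral_normSq_kernelMeasure (k := fun _ => 1) measurable_const
  rw [lintegral_one] at h
  by_contra htop
  rw [not_lt, top_le_iff] at htop
  rw [htop, ENNReal.top_mul ballMeasure_univ_pos.ne'] at h
  have hs := measure_ne_top sphMeasure Set.univ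
  refine ENNReal.mul_ne_top hs (ENNReal.mul_ne_top
    (ENNReal.div_ne_top hs two_ne_zero) ?_) h.symm
  simp⟩

lemma measurePreserving_kernelMeasure (R : E3 ≃ₗᵢ[ℝ] E3) :
    MeasurePreserving R kernelMeasure kernelMeasure := by
  refine ⟨by fun_prop, Measure.ext_of_lintegral _ fun F hF => ?_⟩
  rw [lintegral_map hF (by fun_prop), kernelMeasure,
    lintegral_withDensity_eq_lintegral_mul _ (by fun_prop) (by fun_prop),
    lintegral_withDensity_eq_lintegral_mul _ (by fun_prop) hF,
    ← R.measurePreserving.lintegral_comp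
      (f := (fun z => ENNReal.ofReal (convKernel z)) * F) (by fun_prop)]
  simp [convKernel_map]

lemma ae_circlePoint_spec : ∀ᵐ p ∂(kernelMeasure.prod ballMeasure),
    ‖circlePoint p.1 p.2‖ = 1 ∧ ‖p.1 - circlePoint p.1 p.2‖ = 1 ∧
      ⟪circlePoint p.1 p.2, p.1 - circlePoint p.1 p.2⟫ = ‖p.1‖ ^ 2 / 2 - 1 := by
  have hm : MeasurableSet {p : E3 × E3 | ‖circlePoint p.1 p.2‖ = 1 ∧
      ‖p.1 - circlePoint p.1 p.2‖ = 1 ∧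
      ⟪circlePoint p.1 p.2, p.1 - circlePoint p.1 p.2⟫ = ‖p.1‖ ^ 2 / 2 - 1} :=
    (measurableSet_eq_fun (by fun_prop) (by fun_prop)).inter
      ((measurableSet_eq_fun (by fun_prop) (by fun_prop)).inter
        (measurableSet_eq_fun (by fun_prop) (by fun_prop)))
  rw [Measure.ae_prod_iff_ae_ae hm, kernelMeasure, ae_withDensity_iff (by fun_prop)]
  refine Eventually.of_forall fun z hz => ?_
  obtain ⟨hz0, hz2⟩ := convKernel_ne_zero (z := z) (fun h => hz (by simp [h]))
  exact (ae_orthComponent_ne_zero z).mono fun w hw => circlePoint_spec hz0 hz2 hw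

/-- Disintegration of `σ × σ` along the sum map. -/
lemma map_circlePoint_eq_prod :
    (kernelMeasure.prod ballMeasure).map
      (fun p => (circlePoint p.1 p.2, p.1 - circlePoint p.1 p.2))
      = sphMeasure.prod sphMeasure := by
  have hΨ : Measurable fun p : E3 × E3 =>
    (circlePoint p.1 p.2, p.1 - circlePoint p.1 p.2) := by fun_prop
  have := Measure.isFiniteMeasure_map (kernelMeasure.prod ballMeasure)
    (fun p => (circlePoint p.1 p.2, p.1 - circlePoint p.1 p.2))
  have hm : MeasurableSet {p : E3 × E3 | ‖p.1‖ = 1 ∧ ‖p.2‖ = 1} :=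
    (measurableSet_eq_fun (by fun_prop) (by fun_prop)).inter
      (measurableSet_eq_fun (by fun_prop) (by fun_prop))
  refine lintegral_eq_of_map_inner_eq (fun R => ?_) (fun R => ?_) ?_ ?_ ?_
  · have h := ((measurePreserving_kernelMeasure R).prod (measurePreserving_ballMeasure R)).map_eq
    rw [Measure.map_map (by fun_prop) hΨ]
    conv_rhs => rw [← h, Measure.map_map hΨ (by fun_prop)]
    congr 1
    ext1 p
    simp [circlePoint_map]
  · exact ((measurePreserving_sphMeasure R).prod (measurePreserving_sphMeasure R)).map_eq
  · rw [ae_map_iff hΨ.aemeasurable hm]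
    exact ae_circlePoint_spec.mono fun p hp => ⟨hp.1, hp.2.1⟩
  · rw [Measure.ae_prod_iff_ae_ae hm]
    exact ae_norm_eq_one.mono fun x hx => ae_norm_eq_one.mono fun y hy => ⟨hx, hy⟩
  · refine Measure.ext_of_lintegral _ fun k hk => ?_
    rw [lintegral_map hk (by fun_prop), lintegral_map (by fun_prop) hΨ,
      lintegral_map hk (by fun_prop), lintegral_prod (μ := sphMeasure) _ (by fun_prop)]
    have hR : ∫⁻ x, ∫⁻ y, k ⟪x, y⟫ ∂sphMeasure ∂sphMeasure
        = sphMeasure Set.univ * (sphMeasure Set.univ / 2 * ∫⁻ t in Set.Ioo (-1) 1, k t) := by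
      rw [lintegral_congr_ae (ae_norm_eq_one.mono fun x hx => lintegral_inner_sphMeasure hx hk),
        lintegral_const, mul_comm]
    rw [hR, ← lintegral_normSq_kernelMeasure hk,
      lintegral_congr_ae (ae_circlePoint_spec.mono fun p hp => congrArg k hp.2.2),
      lintegral_prod (fun p => k (‖p.1‖ ^ 2 / 2 - 1)) (by fun_prop)]
    simp only [lintegral_const]
    rw [lintegral_mul_const _ (by fun_prop)]

/-- The density of `fσ * gσ`. -/
def convDensity (f g : E3 → ℂ) (z : E3) : ℂ :=
  convKernel z * ∫ w, f (circlePoint z w) * g (z - circlePoint z w) ∂ballMeasure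

section Density

variable {f g : E3 → ℂ} {F G : ℝ}

lemma norm_mul_le_of_bound (hF : ∀ x, ‖f x‖ ≤ F) (hG : ∀ x, ‖g x‖ ≤ G) (x y : E3) :
    ‖f x * g y‖ ≤ F * G := by
  rw [norm_mul]
  exact mul_le_mul (hF x) (hG y) (norm_nonneg _) ((norm_nonneg _).trans (hF x))

lemma isConvPairDensity_convDensity (hf : Measurable f) (hg : Measurable g)
    (hF : ∀ x, ‖f x‖ ≤ F) (hG : ∀ x, ‖g x‖ ≤ G) :
    IsConvPairDensity f g (convDensity f g) := by
  have hk : ∀ z, convDensity f g z = (ENNReal.ofReal (convKernel z)).toReal •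
      ∫ w, f (circlePoint z w) * g (z - circlePoint z w) ∂ballMeasure := fun z => by
    rw [convDensity, ENNReal.toReal_ofReal (convKernel_nonneg z), Complex.real_smul]
  have hkm : AEMeasurable (fun z => ENNReal.ofReal (convKernel z)) volume := by fun_prop
  refine ⟨?_, fun φ hφ hφc => ?_⟩
  · have h1 : Integrable (fun p : E3 × E3 => f (circlePoint p.1 p.2) *
        g (p.1 - circlePoint p.1 p.2)) (kernelMeasure.prod ballMeasure) :=
      Integrable.of_bound (Measurable.aestronglyMeasurable (by fun_prop)) (F * G)
        (Eventually.of_forall fun p => norm_mul_le_of_bound hF hG _ _)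
    have h2 := h1.integral_prod_left
    rw [kernelMeasure, integrable_withDensity_iff_integrable_smul₀' hkm (by simp)] at h2
    exact h2.congr (Eventually.of_forall fun z => (hk z).symm)
  · obtain ⟨C, hC⟩ := hφ.bounded_above_of_compact_support hφc
    have hC0 : 0 ≤ C := (norm_nonneg _).trans (hC 0)
    have hφm : Measurable φ := hφ.measurable
    let ψ : E3 × E3 → ℂ := fun p => φ (p.1 + p.2) * (f p.1 * g p.2)
    have hψm : Measurable ψ := by fun_prop
    have hψb : ∀ p, ‖ψ p‖ ≤ C * (F * G) := fun p => by
      rw [norm_mul]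
      exact mul_le_mul (hC _) (norm_mul_le_of_bound hF hG _ _) (norm_nonneg _) hC0
    have hψi : ∀ μ : Measure (E3 × E3), IsFiniteMeasure μ → Integrable ψ μ := fun μ _ =>
      Integrable.of_bound hψm.aestronglyMeasurable _ (Eventually.of_forall hψb)
    have hΨ : Measurable fun p : E3 × E3 =>
      (circlePoint p.1 p.2, p.1 - circlePoint p.1 p.2) := by fun_prop
    have hψΨ : Integrable (fun p : E3 × E3 => ψ (circlePoint p.1 p.2, p.1 - circlePoint p.1 p.2))
        (kernelMeasure.prod ballMeasure) :=
      Integrable.of_bound (hψm.comp hΨ).aestronglyMeasurable _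
        (Eventually.of_forall fun p => hψb _)
    calc ∫ z, φ z * convDensity f g z
        = ∫ z, (ENNReal.ofReal (convKernel z)).toReal •
          (φ z * ∫ w, f (circlePoint z w) * g (z - circlePoint z w) ∂ballMeasure) := by
          simp_rw [hk, mul_smul_comm]
      _ = ∫ z, φ z * ∫ w, f (circlePoint z w) * g (z - circlePoint z w) ∂ballMeasure
          ∂kernelMeasure := by
          rw [kernelMeasure, integral_withDensity_eq_integral_toReal_smul₀ hkm (by simp)]
      _ = ∫ z, ∫ w, ψ (circlePoint z w, z - circlePoint z w) ∂ballMeasure ∂kernelMeasure := by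
          simp [ψ, integral_const_mul]
      _ = ∫ p, ψ (circlePoint p.1 p.2, p.1 - circlePoint p.1 p.2)
          ∂(kernelMeasure.prod ballMeasure) := (integral_prod _ hψΨ).symm
      _ = ∫ p, ψ p ∂(sphMeasure.prod sphMeasure) := by
          rw [← map_circlePoint_eq_prod,
            integral_map hΨ.aemeasurable hψm.aestronglyMeasurable]
      _ = _ := integral_prod _ (hψi _ inferInstance)

lemma measurable_convDensity (hf : Measurable f) (hg : Measurable g) :
    Measurable (convDensity f g) := by
  have h : Measurable fun p : E3 × E3 => f (circlePoint p.1 p.2) *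
      g (p.1 - circlePoint p.1 p.2) := by fun_prop
  have h2 := (h.stronglyMeasurable.integral_prod_right' (ν := ballMeasure)).measurable
  unfold convDensity
  fun_prop

lemma convDensity_map (R : E3 ≃ₗᵢ[ℝ] E3) (z : E3) :
    convDensity f g (R z) = convDensity (f ∘ R) (g ∘ R) z := by
  have h := (measurePreserving_ballMeasure R).integral_comp
    R.toHomeomorph.measurableEmbedding
    (fun w => f (circlePoint (R z) w) * g (R z - circlePoint (R z) w))
  simp only [circlePoint_map, ← map_sub] at h
  rw [convDensity, convDensity, convKernel_map, ← h]
  rfl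

lemma norm_convDensity_le (hF : ∀ x, ‖f x‖ ≤ F) (hG : ∀ x, ‖g x‖ ≤ G) (z : E3) :
    ‖convDensity f g z‖ ≤ convKernel z * (F * G * ballMeasure.real Set.univ) := by
  rw [convDensity, norm_mul, Complex.norm_real, Real.norm_of_nonneg (convKernel_nonneg z)]
  exact mul_le_mul_of_nonneg_left (norm_integral_le_of_norm_le_const
    (Eventually.of_forall fun w => norm_mul_le_of_bound hF hG _ _)) (convKernel_nonneg z)

lemma norm_mul_sub_mul_le {a b a' b' : ℂ} {A B δ : ℝ} (hA : ‖a‖ ≤ A) (hB : ‖b'‖ ≤ B)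
    {ε : ℝ} (ha : ‖a' - a‖ ≤ δ) (hb : ‖b' - b‖ ≤ ε) :
    ‖a' * b' - a * b‖ ≤ δ * B + A * ε := by
  rw [show a' * b' - a * b = (a' - a) * b' + a * (b' - b) by ring]
  refine (norm_add_le _ _).trans (add_le_add ?_ ?_) <;> rw [norm_mul]
  · exact mul_le_mul ha hB (norm_nonneg _) ((norm_nonneg _).trans ha)
  · exact mul_le_mul hA hb (norm_nonneg _) ((norm_nonneg _).trans hA)

lemma norm_convDensity_map_sub_le (hf : Measurable f) (hg : Measurable g)
    (hF : ∀ x, ‖f x‖ ≤ F) (hG : ∀ x, ‖g x‖ ≤ G) {R : E3 ≃ₗᵢ[ℝ] E3} {δ : ℝ}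
    (hfR : ∀ x, ‖f (R x) - f x‖ ≤ F * δ) (hgR : ∀ x, ‖g (R x) - g x‖ ≤ G * δ) (z : E3) :
    ‖convDensity f g (R z) - convDensity f g z‖
      ≤ convKernel z * (2 * δ * (F * G) * ballMeasure.real Set.univ) := by
  have hz : Measurable fun w => circlePoint z w := 
    measurable_circlePoint.comp (measurable_const.prodMk measurable_id)
  have hi : ∀ f g : E3 → ℂ, Measurable f → Measurable g → (∀ x, ‖f x‖ ≤ F) → (∀ x, ‖g x‖ ≤ G) →
      Integrable (fun w => f (circlePoint z w) * g (z - circlePoint z w)) ballMeasure :=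
    fun f g hf hg hF hG => Integrable.of_bound
      (Measurable.aestronglyMeasurable (by fun_prop)) (F * G)
      (Eventually.of_forall fun w => norm_mul_le_of_bound hF hG _ _)
  rw [convDensity_map, convDensity, convDensity, ← mul_sub, ← integral_sub
    (hi (f ∘ R) (g ∘ R) (by fun_prop) (by fun_prop) (fun x => hF _) (fun x => hG _))
    (hi f g hf hg hF hG), norm_mul, Complex.norm_real,
    Real.norm_of_nonneg (convKernel_nonneg z)]
  refine mul_le_mul_of_nonneg_left (norm_integral_le_of_norm_le_const
    (Eventually.of_forall fun w => ?_)) (convKernel_nonneg z)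
  refine (norm_mul_sub_mul_le (hF _) (hG _) (hfR _) (hgR _)).trans_eq ?_
  ring

end Density

lemma exists_integral_convKernel_le : ∃ K : ℝ, 0 ≤ K ∧ ∀ x : E3, ‖x‖ = 1 →
    Integrable (fun y => convKernel (x - y)) sphMeasure ∧
      ∫ y, convKernel (x - y) ∂sphMeasure ≤ K := by
  set c := sphMeasure.real Set.univ ^ 2 / (8 * Real.pi * ballMeasure.real Set.univ) with hc
  have hc0 : 0 ≤ c := by positivity
  let k : ℝ → ℝ≥0∞ := fun t => ENNReal.ofReal (c / √(2 - 2 * t))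
  have hk : Measurable k := by fun_prop
  have hfin : ∫⁻ t in Set.Ioo (-1) 1, k t < ⊤ := by
    have himg : (fun u : ℝ => 1 - u ^ 2 / 2) '' Set.Ioo 0 2 = Set.Ioo (-1) 1 := by
      ext t
      constructor
      · rintro ⟨u, ⟨h0, h2⟩, rfl⟩
        constructor <;> nlinarith
      · rintro ⟨h0, h2⟩
        refine ⟨√(2 - 2 * t), ⟨Real.sqrt_pos.2 (by linarith), ?_⟩, ?_⟩
        · rw [Real.sqrt_lt' two_pos]; linarith
        · simp only [Real.sq_sqrt (show 0 ≤ 2 - 2 * t by linarith)]; ring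
    have hsub := lintegral_image_eq_lintegral_abs_deriv_mul (s := Set.Ioo (0 : ℝ) 2)
      (f := fun u : ℝ => 1 - u ^ 2 / 2) (f' := fun u => -u) measurableSet_Ioo
      (fun u _ => by
        have := (((hasDerivAt_pow 2 u).div_const 2).const_sub 1).hasDerivWithinAt
          (s := Set.Ioo (0 : ℝ) 2)
        simpa using this)
      (fun a ha b hb hab => by
        have : a ^ 2 = b ^ 2 := by simp only at hab; linarith
        exact (pow_left_inj₀ ha.1.le hb.1.le two_ne_zero).1 this) k
    rw [← himg, hsub]
    calc _ ≤ ∫⁻ _ in Set.Ioo (0 : ℝ) 2, ENNReal.ofReal c := by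
          refine setLIntegral_mono measurable_const fun u hu => ?_
          have hs : √(2 - 2 * (1 - u ^ 2 / 2)) = u := by
            rw [show 2 - 2 * (1 - u ^ 2 / 2) = u ^ 2 by ring, Real.sqrt_sq hu.1.le]
          rw [abs_neg, abs_of_pos hu.1, ← ENNReal.ofReal_mul hu.1.le, hs,
            mul_div_cancel₀ _ hu.1.ne']
      _ < ⊤ := by
          rw [setLIntegral_const, Real.volume_Ioo]
          exact ENNReal.mul_lt_top ENNReal.ofReal_lt_top ENNReal.ofReal_lt_top
  have hKtop : sphMeasure Set.univ / 2 * ∫⁻ t in Set.Ioo (-1) 1, k t < ⊤ :=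
    ENNReal.mul_lt_top (ENNReal.div_lt_top (measure_ne_top _ _) two_ne_zero) hfin
  refine ⟨(sphMeasure Set.univ / 2 * ∫⁻ t in Set.Ioo (-1) 1, k t).toReal,
    ENNReal.toReal_nonneg, fun x hx => ?_⟩
  have hle : ∫⁻ y, ENNReal.ofReal (convKernel (x - y)) ∂sphMeasure
      ≤ sphMeasure Set.univ / 2 * ∫⁻ t in Set.Ioo (-1) 1, k t := by
    rw [← lintegral_inner_sphMeasure hx hk]
    refine lintegral_mono_ae (ae_norm_eq_one.mono fun y hy => ENNReal.ofReal_le_ofReal ?_)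
    have hxy : √(2 - 2 * ⟪x, y⟫) = ‖x - y‖ := by
      rw [← Real.sqrt_sq (norm_nonneg (x - y)), norm_sub_sq_real, hx, hy]
      congr 1
      ring
    rw [hxy, convKernel, ← hc]
    split_ifs
    · exact le_rfl
    · positivity
  have hm : AEStronglyMeasurable (fun y => convKernel (x - y)) sphMeasure :=
    Measurable.aestronglyMeasurable (by fun_prop)
  have hnn : 0 ≤ᵐ[sphMeasure] fun y => convKernel (x - y) :=
    Eventually.of_forall fun y => convKernel_nonneg _
  refine ⟨(lintegral_ofReal_ne_top_iff_integrable hm hnn).1 (hle.trans_lt hKtop).ne, ?_⟩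
  rw [integral_eq_lintegral_of_nonneg_ae hnn hm]
  exact ENNReal.toReal_mono hKtop.ne hle

/-- Any two unit vectors are related by a linear isometry that moves no unit vector much further
than the distance of the two. -/
lemma exists_isometry_norm_sub_le {x x' : E3} (hx : ‖x‖ = 1) (hx' : ‖x'‖ = 1) :
    ∃ R : E3 ≃ₗᵢ[ℝ] E3, R x = x' ∧ ∀ y, ‖y‖ = 1 → ‖R y - y‖ ≤ 4 * ‖x - x'‖ := by
  by_cases hn : x + x' = 0
  · refine ⟨LinearIsometryEquiv.neg ℝ, ?_, fun y hy => ?_⟩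
    · simpa using neg_eq_of_add_eq_zero_right hn
    · have h1 : x - x' = (2 : ℝ) • x := by rw [eq_neg_of_add_eq_zero_right hn]; module
      have h2 : (LinearIsometryEquiv.neg ℝ : E3 ≃ₗᵢ[ℝ] E3) y - y = (-2 : ℝ) • y := by
        simp; module
      rw [h1, h2, norm_smul, norm_smul, hx, hy]
      norm_num
  · set n := (1 / 2 : ℝ) • (x + x') with hnd
    have hn0 : n ≠ 0 := smul_ne_zero (by norm_num) hn
    set m := ‖n‖⁻¹ • n with hm
    have hm1 : ‖m‖ = 1 := by simp [hm, norm_smul, hn0]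
    have hrefl : ∀ v y : E3, ‖v‖ = 1 →
        (ℝ ∙ v).reflection y = (2 * ⟪v, y⟫) • v - y := fun v y hv => by
      rw [Submodule.reflection_singleton_apply, hv]
      simp [two_mul, add_smul, two_smul]
    have hxm : ‖x - m‖ ≤ ‖x - x'‖ := by
      have h1 : ‖x - n‖ = ‖x - x'‖ / 2 := by
        rw [hnd, show x - (1 / 2 : ℝ) • (x + x') = (1 / 2 : ℝ) • (x - x') by module, norm_smul]
        norm_num
        ring
      have h2 : ‖n - m‖ ≤ ‖x - n‖ := by
        have h3 : n - m = (‖n‖ - 1) • m := by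
          rw [sub_smul, one_smul, hm, smul_inv_smul₀ (norm_ne_zero_iff.2 hn0)]
        rw [h3, norm_smul, hm1, mul_one, Real.norm_eq_abs, ← hx, abs_sub_comm]
        exact abs_norm_sub_norm_le x n
      have h4 := norm_add_le (x - n) (n - m)
      rw [sub_add_sub_cancel] at h4
      linarith
    refine ⟨(ℝ ∙ x).reflection.trans (ℝ ∙ m).reflection, ?_, fun y hy => ?_⟩
    · have h1 : (ℝ ∙ x).reflection x = x :=
        Submodule.reflection_mem_subspace_eq_self (Submodule.mem_span_singleton_self x)
      have hinner : 2 * ⟪n, x⟫ = 2 * ‖n‖ ^ 2 := by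
        rw [hnd, norm_smul, mul_pow, norm_add_sq_real, real_inner_smul_left, inner_add_left,
          real_inner_self_eq_norm_sq, real_inner_comm x x', hx, hx']
        norm_num
        ring
      have hn' : ‖n‖ ≠ 0 := norm_ne_zero_iff.2 hn0
      rw [LinearIsometryEquiv.trans_apply, h1, hrefl m x hm1, hm, real_inner_smul_left, smul_smul,
        show 2 * (‖n‖⁻¹ * ⟪n, x⟫) * ‖n‖⁻¹ = (2 * ⟪n, x⟫) / ‖n‖ ^ 2 by field_simp, hinner,
        mul_div_cancel_right₀ _ (pow_ne_zero 2 hn'), hnd]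
      module
    · have h1 : ‖((ℝ ∙ x).reflection.trans (ℝ ∙ m).reflection) y - y‖
          = ‖(ℝ ∙ x).reflection y - (ℝ ∙ m).reflection y‖ := by
        rw [LinearIsometryEquiv.trans_apply, ← (ℝ ∙ m).reflection.norm_map, map_sub,
          Submodule.reflection_reflection]
      have h2 : (ℝ ∙ x).reflection y - (ℝ ∙ m).reflection y
          = (2 * ⟪x - m, y⟫) • x + (2 * ⟪m, y⟫) • (x - m) := by
        rw [hrefl x y hx, hrefl m y hm1, inner_sub_left]; module
      have h3 := abs_real_inner_le_norm (x - m) y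
      have h4 := abs_real_inner_le_norm m y
      rw [hy, mul_one] at h3
      rw [hy, hm1, mul_one] at h4
      rw [h1, h2]
      refine (norm_add_le _ _).trans ?_
      rw [norm_smul, norm_smul, hx, Real.norm_eq_abs, Real.norm_eq_abs, abs_mul, abs_mul, abs_two]
      nlinarith [norm_nonneg (x - m), mul_le_mul_of_nonneg_right h4 (norm_nonneg (x - m))]

lemma mem_sph {x : E3} : x ∈ sph ↔ ‖x‖ = 1 := mem_sphere_zero_iff_norm

section Holder

variable {α : ℝ} {h : E3 → ℂ}

lemma norm_le_toReal_holderNormE (hh : holderNormE α h < ⊤) {x : E3} (hx : x ∈ sph) :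
    ‖h x‖ ≤ (holderNormE α h).toReal := by
  rw [← ENNReal.ofReal_le_iff_le_toReal hh.ne]
  exact (le_iSup (fun x : sph => ENNReal.ofReal ‖h x.1‖) ⟨x, hx⟩).trans le_self_add

lemma norm_sub_le_toReal_holderNormE (hh : holderNormE α h < ⊤) {x y : E3} (hx : x ∈ sph)
    (hy : y ∈ sph) : ‖h x - h y‖ ≤ (holderNormE α h).toReal * ‖x - y‖ ^ α := by
  rcases eq_or_ne x y with rfl | hxy
  · rw [sub_self, norm_zero]
    positivity
  · rw [← div_le_iff₀ (Real.rpow_pos_of_pos (norm_sub_pos_iff.2 hxy) α),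
      ← ENNReal.ofReal_le_iff_le_toReal hh.ne]
    exact (le_iSup₂ (f := fun x y : sph =>
      ENNReal.ofReal (‖h x.1 - h y.1‖ / ‖x.1 - y.1‖ ^ α)) ⟨x, hx⟩ ⟨y, hy⟩).trans le_add_self

lemma norm_indicator_le_toReal_holderNormE (hh : holderNormE α h < ⊤) (x : E3) :
    ‖sph.indicator h x‖ ≤ (holderNormE α h).toReal := by
  by_cases hx : x ∈ sph
  · rw [Set.indicator_of_mem hx]
    exact norm_le_toReal_holderNormE hh hx
  · rw [Set.indicator_of_notMem hx, norm_zero]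
    positivity

lemma measurable_indicator_of_holderNormE_lt_top (hα : 0 < α) (hh : holderNormE α h < ⊤) :
    Measurable (sph.indicator h) := by
  classical
  have hc : ContinuousOn h sph := fun x hx => by
    rw [ContinuousWithinAt, tendsto_iff_norm_sub_tendsto_zero]
    refine squeeze_zero' (Eventually.of_forall fun y => norm_nonneg _)
      (eventually_mem_nhdsWithin.mono fun y hy => norm_sub_le_toReal_holderNormE hh hy hx) ?_
    have : Continuous fun y : E3 => (holderNormE α h).toReal * ‖y - x‖ ^ α :=
      continuous_const.mul (Continuous.rpow_const (by fun_prop) fun _ => Or.inr hα.le)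
    simpa [Real.zero_rpow hα.ne'] using (this.tendsto x).mono_left nhdsWithin_le_nhds
  rw [← Set.piecewise_eq_indicator]
  exact hc.measurable_piecewise continuousOn_const measurableSet_sph

lemma norm_indicator_map_sub_le (hα : 0 ≤ α) (hh : holderNormE α h < ⊤) {R : E3 ≃ₗᵢ[ℝ] E3} {r : ℝ}
    (hR : ∀ y, ‖y‖ = 1 → ‖R y - y‖ ≤ r) (hr : 0 ≤ r) (x : E3) :
    ‖sph.indicator h (R x) - sph.indicator h x‖ ≤ (holderNormE α h).toReal * r ^ α := by
  by_cases hx : x ∈ sph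
  · have hRx : R x ∈ sph := by rwa [mem_sph, R.norm_map, ← mem_sph]
    rw [Set.indicator_of_mem hx, Set.indicator_of_mem hRx]
    refine (norm_sub_le_toReal_holderNormE hh hRx hx).trans ?_
    have := hR x (mem_sph.1 hx)
    gcongr
  · have hRx : R x ∉ sph := by rwa [mem_sph, R.norm_map, ← mem_sph]
    rw [Set.indicator_of_notMem hx, Set.indicator_of_notMem hRx, sub_zero, norm_zero]
    positivity

end Holder

lemma indicator_sph_ae_eq (f : E3 → ℂ) : sph.indicator f =ᵐ[sphMeasure] f :=
  ae_norm_eq_one.mono fun _ hx => Set.indicator_of_mem (mem_sph.2 hx) f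

lemma IsConvPairDensity.congr {f g f' g' Q : E3 → ℂ} (h : IsConvPairDensity f g Q)
    (hf : f =ᵐ[sphMeasure] f') (hg : g =ᵐ[sphMeasure] g') : IsConvPairDensity f' g' Q := by
  refine ⟨h.1, fun φ hφ hφc => (h.2 φ hφ hφc).trans ?_⟩
  refine integral_congr_ae (hf.mono fun x hx => integral_congr_ae (hg.mono fun y hy => ?_))
  simp only [hx, hy]

/-- The restriction to the sphere of the density of `fσ * gσ * hσ`. -/
def tripleConv (f g h : E3 → ℂ) (x : E3) : ℂ :=
  ∫ y, h y * convDensity f g (x - y) ∂sphMeasure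

section Triple

variable {f g h : E3 → ℂ} {F G H K : ℝ}

lemma norm_mul_convDensity_le (hF : ∀ x, ‖f x‖ ≤ F) (hG : ∀ x, ‖g x‖ ≤ G) (hH : ∀ x, ‖h x‖ ≤ H)
    (x y : E3) : ‖h y * convDensity f g (x - y)‖
      ≤ convKernel (x - y) * (F * G * H * ballMeasure.real Set.univ) := by
  rw [norm_mul]
  refine (mul_le_mul (hH y) (norm_convDensity_le hF hG _) (norm_nonneg _)
    ((norm_nonneg _).trans (hH y))).trans_eq ?_
  ring

lemma norm_tripleConv_le (hF : ∀ x, ‖f x‖ ≤ F) (hG : ∀ x, ‖g x‖ ≤ G) (hH : ∀ x, ‖h x‖ ≤ H) {x : E3}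
    (hi : Integrable (fun y => convKernel (x - y)) sphMeasure)
    (hK : ∫ y, convKernel (x - y) ∂sphMeasure ≤ K) :
    ‖tripleConv f g h x‖ ≤ K * (F * G * H * ballMeasure.real Set.univ) := by
  have hF0 := (norm_nonneg _).trans (hF 0)
  have hG0 := (norm_nonneg _).trans (hG 0)
  have hH0 := (norm_nonneg _).trans (hH 0)
  refine (norm_integral_le_of_norm_le (hi.mul_const _)
    (Eventually.of_forall fun y => norm_mul_convDensity_le hF hG hH x y)).trans ?_
  rw [integral_mul_const]
  gcongr

lemma norm_tripleConv_map_sub_le (hf : Measurable f) (hg : Measurable g) (hh : Measurable h)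
    (hF : ∀ x, ‖f x‖ ≤ F) (hG : ∀ x, ‖g x‖ ≤ G) (hH : ∀ x, ‖h x‖ ≤ H)
    {R : E3 ≃ₗᵢ[ℝ] E3} {δ : ℝ} (hδ : 0 ≤ δ) (hfR : ∀ x, ‖f (R x) - f x‖ ≤ F * δ)
    (hgR : ∀ x, ‖g (R x) - g x‖ ≤ G * δ) (hhR : ∀ x, ‖h (R x) - h x‖ ≤ H * δ) {x : E3}
    (hi : Integrable (fun y => convKernel (x - y)) sphMeasure)
    (hK : ∫ y, convKernel (x - y) ∂sphMeasure ≤ K) :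
    ‖tripleConv f g h (R x) - tripleConv f g h x‖
      ≤ K * (3 * δ * (F * G * H) * ballMeasure.real Set.univ) := by
  have hF0 := (norm_nonneg _).trans (hF 0)
  have hG0 := (norm_nonneg _).trans (hG 0)
  have hH0 := (norm_nonneg _).trans (hH 0)
  have hQ : Measurable (convDensity f g) := measurable_convDensity hf hg
  have hmap : tripleConv f g h (R x)
      = ∫ y, h (R y) * convDensity f g (R (x - y)) ∂sphMeasure := by
    simp_rw [map_sub]
    exact ((measurePreserving_sphMeasure R).integral_comp R.toHomeomorph.measurableEmbedding
      fun y => h y * convDensity f g (R x - y)).symm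
  have hi₀ : Integrable (fun y => h y * convDensity f g (x - y)) sphMeasure :=
    (hi.mul_const _).mono' (Measurable.aestronglyMeasurable (by fun_prop))
      (Eventually.of_forall fun y => norm_mul_convDensity_le hF hG hH x y)
  have hiR : Integrable (fun y => h (R y) * convDensity f g (R (x - y))) sphMeasure := by
    refine (hi.mul_const (F * G * H * ballMeasure.real Set.univ)).mono'
      (Measurable.aestronglyMeasurable (by fun_prop))
      (Eventually.of_forall fun y => ?_)
    have := norm_mul_convDensity_le hF hG hH (R x) (R y)
    rwa [← map_sub, convKernel_map] at this
  rw [hmap, tripleConv, ← integral_sub hiR hi₀]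
  refine (norm_integral_le_of_norm_le (hi.mul_const (3 * δ * (F * G * H) *
    ballMeasure.real Set.univ)) (Eventually.of_forall fun y => ?_)).trans ?_
  · have hb := norm_convDensity_le hF hG (R (x - y))
    rw [convKernel_map] at hb
    refine (norm_mul_sub_mul_le (hH y) hb (hhR y)
      (norm_convDensity_map_sub_le hf hg hF hG hfR hgR _)).trans_eq ?_
    ring
  · rw [integral_mul_const]
    gcongr

end Triple

/-- **Trilinear Hölder bound, uniform in `α`.** There is a constant `A < ∞` such that for all
`α ∈ (0,1)` and all `h₁, h₂, h₃ ∈ Λ_α(S²)`,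
`‖(h₁σ*h₂σ*h₃σ)|_{S²}‖_{Λ_α} ≤ A ‖h₁‖_{Λ_α} ‖h₂‖_{Λ_α} ‖h₃‖_{Λ_α}`.  The triple convolution
restricted to the sphere is `x ↦ ∫ h₃(y) Q(x-y) dσ(y)` where `Q` is (the continuous choice
of) the density of `h₁σ*h₂σ`. -/
theorem trilinear_holder_bound :
    ∃ A : ℝ≥0∞, A < ⊤ ∧
      ∀ α : ℝ, α ∈ Set.Ioo (0 : ℝ) 1 →
      ∀ h₁ h₂ h₃ : E3 → ℂ,
        holderNormE α h₁ < ⊤ → holderNormE α h₂ < ⊤ → holderNormE α h₃ < ⊤ →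
        ∃ Q : E3 → ℂ, IsConvPairDensity h₁ h₂ Q ∧
          holderNormE α (fun x => ∫ y, h₃ y * Q (x - y) ∂sphMeasure)
            ≤ A * holderNormE α h₁ * holderNormE α h₂ * holderNormE α h₃ := by
  obtain ⟨K, hK0, hK⟩ := exists_integral_convKernel_le
  set V := ballMeasure.real Set.univ with hV
  refine ⟨ENNReal.ofReal (K * V) + ENNReal.ofReal (12 * K * V), by simp, ?_⟩
  rintro α ⟨hα0, hα1⟩ h₁ h₂ h₃ hh₁ hh₂ hh₃
  set f := sph.indicator h₁
  set g := sph.indicator h₂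
  set h := sph.indicator h₃
  have hf : Measurable f := measurable_indicator_of_holderNormE_lt_top hα0 hh₁
  have hg : Measurable g := measurable_indicator_of_holderNormE_lt_top hα0 hh₂
  have hh : Measurable h := measurable_indicator_of_holderNormE_lt_top hα0 hh₃
  have hF := norm_indicator_le_toReal_holderNormE hh₁
  have hG := norm_indicator_le_toReal_holderNormE hh₂
  have hH := norm_indicator_le_toReal_holderNormE hh₃
  refine ⟨convDensity f g, (isConvPairDensity_convDensity hf hg hF hG).congr
    (indicator_sph_ae_eq h₁) (indicator_sph_ae_eq h₂), ?_⟩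
  have htriple : (fun x => ∫ y, h₃ y * convDensity f g (x - y) ∂sphMeasure) = tripleConv f g h := by
    ext x
    refine integral_congr_ae ((indicator_sph_ae_eq h₃).mono fun y hy => ?_)
    simp only [h, hy]
  rw [htriple]
  set a := (holderNormE α h₁).toReal with ha
  set b := (holderNormE α h₂).toReal with hb
  set c := (holderNormE α h₃).toReal with hc
  have hofReal : ∀ C : ℝ, 0 ≤ C → ENNReal.ofReal C * holderNormE α h₁ * holderNormE α h₂ *
      holderNormE α h₃ = ENNReal.ofReal (C * a * b * c) := fun C hC => by
    rw [ENNReal.ofReal_mul (by positivity), ENNReal.ofReal_mul (by positivity),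
      ENNReal.ofReal_mul hC, ha, hb, hc, ENNReal.ofReal_toReal hh₁.ne,
      ENNReal.ofReal_toReal hh₂.ne, ENNReal.ofReal_toReal hh₃.ne]
  rw [add_mul, add_mul, add_mul, hofReal _ (by positivity), hofReal _ (by positivity)]
  refine add_le_add (iSup_le fun x => ENNReal.ofReal_le_ofReal ?_)
    (iSup₂_le fun x x' => ENNReal.ofReal_le_ofReal ?_)
  · have hx := hK x (mem_sph.1 x.2)
    refine (norm_tripleConv_le hF hG hH hx.1 hx.2).trans_eq ?_
    ring
  · refine div_le_of_le_mul₀ (by positivity) (by positivity) ?_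
    obtain ⟨R, hRx, hR⟩ := exists_isometry_norm_sub_le (mem_sph.1 x'.2) (mem_sph.1 x.2)
    have hx' := hK x' (mem_sph.1 x'.2)
    have hr : 0 ≤ 4 * ‖x'.1 - x.1‖ := by positivity
    have hδ : (4 * ‖x'.1 - x.1‖) ^ α ≤ 4 * ‖x.1 - x'.1‖ ^ α := by
      rw [Real.mul_rpow (by norm_num) (norm_nonneg _), norm_sub_rev]
      gcongr
      exact Real.rpow_le_self_of_one_le (by norm_num) hα1.le
    rw [← hRx]
    refine (norm_tripleConv_map_sub_le hf hg hh hF hG hH (by positivity)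
      (norm_indicator_map_sub_le hα0.le hh₁ hR hr) (norm_indicator_map_sub_le hα0.le hh₂ hR hr)
      (norm_indicator_map_sub_le hα0.le hh₃ hR hr) hx'.1 hx'.2).trans ?_
    rw [hRx]
    calc K * (3 * (4 * ‖x'.1 - x.1‖) ^ α * (a * b * c) * V)
        ≤ K * (3 * (4 * ‖x.1 - x'.1‖ ^ α) * (a * b * c) * V) := by gcongr
      _ = 12 * K * V * a * b * c * ‖x.1 - x'.1‖ ^ α := by ring

end
end

section
/- Let ψ : B(0,2) → ℝ be a measurable function on the open ball B(0,2) ⊂ ℝ³. Let z̄₁, z̄₂, z̄₃ ∈ ℝ³ be such that z̄₄ := z̄₁ + z̄₂ − z̄₃ and z̄₁, z̄₂, z̄₃, z̄₄ all lie in B(0,2). Suppose there is a neighborhood U of (z̄₁, z̄₂, z̄₃) in (ℝ³)³ such that for Lebesgue-almost every (z₁, z₂, z₃) ∈ U, setting z₄ := z₁ + z₂ − z₃, one has e^{i[ψ(z₁)+ψ(z₂)]} = e^{i[ψ(z₃)+ψ(z₄)]}. Then there exist ξ ∈ ℝ³, a constant c ∈ ℂ with |c| = 1, and a neighborhood V ⊂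 ℝ³ of z̄₁ such that e^{iψ(w)} = c e^{iw·ξ} for Lebesgue-almost every w ∈ V. -/
open MeasureTheory Metric Filter
open scoped ENNReal RealInnerProductSpace

noncomputable section

section LocalCharacter

variable {E : Type*} [NormedAddCommGroup E] [InnerProductSpace ℝ E] [FiniteDimensional ℝ E]

/-- A differentiable unimodular function that is, near `a`, a multiple of a local character is an
exponential near `a`. -/
theorem exists_exp_inner_of_local_mul {G : E → ℂ} (hG : Differentiable ℝ G) {a : E} {r : ℝ}
    (hr : 0 < r) (hnorm : ∀ x ∈ ball a r, ‖G x‖ = 1)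
    (hmul : ∀ x ∈ ball a r, ∀ h ∈ ball (0 : E) r, G (x + h) * G a = G x * G (a + h)) :
    ∃ (ξ : E) (c : ℂ), ‖c‖ = 1 ∧
      ∀ x ∈ ball a r, G x = c * Complex.exp (Complex.I * ((⟪x, ξ⟫ : ℝ) : ℂ)) := by
  have ha : a ∈ ball a r := mem_ball_self hr
  have hGa : G a ≠ 0 := fun h => by simpa [h] using hnorm a ha
  set L : E →L[ℝ] ℂ := (G a)⁻¹ • fderiv ℝ G a with hL
  have hderiv : ∀ x ∈ ball a r, fderiv ℝ G x = G x • L := by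
    intro x hx
    have h₁ : HasFDerivAt (fun h => G (x + h) * G a) (G a • fderiv ℝ G x) 0 := by
      have : HasFDerivAt (fun h => G (x + h)) (fderiv ℝ G x) 0 := by
        rw [hasFDerivAt_comp_add_left]
        simpa using (hG x).hasFDerivAt
      exact this.mul_const (G a)
    have h₂ : HasFDerivAt (fun h => G x * G (a + h)) (G x • fderiv ℝ G a) 0 := by
      have : HasFDerivAt (fun h => G (a + h)) (fderiv ℝ G a) 0 := by
        rw [hasFDerivAt_comp_add_left]
        simpa using (hG a).hasFDerivAt
      exact this.const_mul (G x)
    have heq : (fun h => G (x + h) * G a) =ᶠ[nhds 0] fun h => G x * G (a + h) := by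
      filter_upwards [ball_mem_nhds (0 : E) hr] with h hh using hmul x hx h hh
    have h₃ := h₁.unique (h₂.congr_of_eventuallyEq heq)
    calc fderiv ℝ G x = (G a)⁻¹ • (G a • fderiv ℝ G x) := by
          rw [smul_smul, inv_mul_cancel₀ hGa, one_smul]
      _ = G x • L := by rw [h₃, hL, smul_smul, smul_smul, mul_comm]
  have hK : ∀ x ∈ ball a r,
      HasFDerivAt (fun x => G x * Complex.exp (-L x)) (0 : E →L[ℝ] ℂ) x := by
    intro x hx
    have h₁ : HasFDerivAt (fun x => Complex.exp (-L x)) (Complex.exp (-L x) • -L) x :=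
      (L.hasFDerivAt.neg).cexp
    have h₂ := (hG x).hasFDerivAt.mul h₁
    rw [hderiv x hx] at h₂
    refine h₂.congr_fderiv ?_
    rw [smul_neg, smul_neg, smul_comm (G x), neg_add_cancel]
  have hconst : ∀ x ∈ ball a r, G x = (G a * Complex.exp (-L a)) * Complex.exp (L x) := by
    intro x hx
    have := isOpen_ball.is_const_of_fderiv_eq_zero (𝕜 := ℝ) (convex_ball a r).isPreconnected
      (fun y hy => (hK y hy).differentiableAt.differentiableWithinAt)
      (fun y hy => (hK y hy).fderiv) ha hx
    rw [this, mul_assoc, ← Complex.exp_add]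
    simp
  have hre_ball : ∀ h ∈ ball (0 : E) r, (L h).re = 0 := by
    intro h hh
    have hah : a + h ∈ ball a r := by simpa [mem_ball_iff_norm] using hh
    have := hnorm _ hah
    rw [hconst _ hah, mul_assoc, ← Complex.exp_add, norm_mul, hnorm a ha, Complex.norm_exp] at this
    simpa using this
  have hre : ∀ h, (L h).re = 0 := by
    intro h
    have hpos : 0 < ‖h‖ + 1 := by positivity
    have hmem : (r / (‖h‖ + 1)) • h ∈ ball (0 : E) r := by
      rw [mem_ball_zero_iff, norm_smul, Real.norm_of_nonneg (by positivity), div_mul_eq_mul_div,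
        div_lt_iff₀ hpos]
      nlinarith
    have := hre_ball _ hmem
    rw [map_smul, Complex.smul_re, smul_eq_mul] at this
    exact (mul_eq_zero.1 this).resolve_left (by positivity)
  refine ⟨(InnerProductSpace.toDual ℝ E).symm (Complex.imCLM ∘L L), G a * Complex.exp (-L a),
    ?_, fun x hx => ?_⟩
  · rw [norm_mul, hnorm a ha, Complex.norm_exp]
    simp [hre]
  · rw [hconst x hx, real_inner_comm, InnerProductSpace.toDual_symm_apply]
    congr 2
    apply Complex.ext <;> simp [hre]

end LocalCharacter

section Pexider

variable {E : Type*} [NormedAddCommGroup E] [InnerProductSpace ℝ E] [FiniteDimensional ℝ E]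
  [MeasurableSpace E] [BorelSpace E]

theorem locallyIntegrable_of_norm_eq_one {F : E → ℂ} (hF : Measurable F) (hF1 : ∀ x, ‖F x‖ = 1) :
    LocallyIntegrable F (volume : Measure E) :=
  (locallyIntegrable_const (1 : ℝ)).mono hF.aestronglyMeasurable
    (Eventually.of_forall fun x => by simp [hF1 x])

/-- A unimodular measurable solution of `F x * F y = H (x + y)` on a product of balls agrees
almost everywhere with a differentiable function on the first ball. -/
theorem exists_differentiable_ae_eq_of_mul_eq {F H : E → ℂ} (hF : Measurable F)
    (hF1 : ∀ x, ‖F x‖ = 1) (hH : Measurable H) (hH1 : ∀ x, ‖H x‖ = 1) {a b : E} {r : ℝ}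
    (hr : 0 < r)
    (h : ∀ᵐ x : E, ∀ᵐ y : E, x ∈ ball a r → y ∈ ball b r → F x * F y = H (x + y)) :
    ∃ G : E → ℂ, Differentiable ℝ G ∧ ∀ᵐ x : E, x ∈ ball a r → F x = G x := by
  obtain ⟨φ, hφ, hφc, hφs, hφ0⟩ : ∃ φ : E → ℝ, ContDiff ℝ (⊤ : ℕ∞) φ ∧ HasCompactSupport φ ∧
      tsupport φ ⊆ ball b r ∧ ∫ x, φ x • F x ≠ 0 := by
    by_contra! hcon
    have hae := isOpen_ball.ae_eq_zero_of_integral_contDiff_smul_eq_zero (U := ball b r)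
      ((locallyIntegrable_of_norm_eq_one hF hF1).locallyIntegrableOn _) hcon
    obtain ⟨x, hx, hx'⟩ := (Measure.dense_of_ae hae).exists_mem_open isOpen_ball
      ⟨b, mem_ball_self hr⟩
    simpa [hx hx'] using hF1 x
  set C : ℂ := ∫ x, φ x • F x
  refine ⟨fun x => C⁻¹ * convolution (fun t => φ (-t)) H (ContinuousLinearMap.lsmul ℝ ℝ) volume x,
    ?_, ?_⟩
  · have hneg : HasCompactSupport fun t => φ (-t) := hφc.comp_homeomorph (Homeomorph.neg E)
    have := hneg.contDiff_convolution_left (ContinuousLinearMap.lsmul ℝ ℝ)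
      (hφ.comp contDiff_neg) (locallyIntegrable_of_norm_eq_one hH hH1)
    exact (this.differentiable (by simp)).const_mul _
  · filter_upwards [h] with x hx hxa
    have hconv : convolution (fun t => φ (-t)) H (ContinuousLinearMap.lsmul ℝ ℝ) volume x
        = F x * C := by
      calc convolution (fun t => φ (-t)) H (ContinuousLinearMap.lsmul ℝ ℝ) volume x
          = ∫ t, φ (-t) • H (x + -t) := by
            simp [convolution_def, sub_eq_add_neg]
        _ = ∫ y, φ y • H (x + y) := integral_neg_eq_self (fun y => φ y • H (x + y)) volume
        _ = ∫ y, F x * (φ y • F y) := by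
            refine integral_congr_ae ?_
            filter_upwards [hx] with y hy
            by_cases hyb : y ∈ ball b r
            · rw [← hy hxa hyb, mul_smul_comm]
            · have : φ y = 0 := image_eq_zero_of_notMem_tsupport fun h' => hyb (hφs h')
              simp [this]
        _ = F x * C := integral_const_mul _ _
    rw [hconv, mul_comm (F x), inv_mul_cancel_left₀ hφ0]

/-- If `G x * F y = H (x + y)` almost everywhere on a product of balls and `G` is continuous, then
`G` is multiplicative around the centre of the first ball. -/
theorem mul_eq_mul_of_ae_mul_eq {F G H : E → ℂ} (hG : Continuous G) (hF1 : ∀ x, ‖F x‖ = 1)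
    {a b : E} {r : ℝ} (hr : 0 < r)
    (h : ∀ᵐ y : E, ∀ᵐ x : E, x ∈ ball a r → y ∈ ball b r → G x * F y = H (x + y)) :
    ∀ x ∈ ball a (r / 2), ∀ k ∈ ball (0 : E) (r / 2), G (x + k) * G a = G x * G (a + k) := by
  have hr2 : 0 < r / 2 := by positivity
  have hdense := Measure.dense_of_ae h
  obtain ⟨y₀, hy₀, hy₀b⟩ := hdense.exists_mem_open isOpen_ball ⟨b, mem_ball_self hr2⟩
  rw [mem_ball_iff_norm] at hy₀b
  intro x hx
  suffices hcl : Set.EqOn (fun k => G (x + k) * G a) (fun k => G x * G (a + k))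
      (ball (0 : E) (r / 2)) from fun k hk => hcl hk
  set D : Set E := {k | ∀ᵐ x : E, x ∈ ball a r → k + y₀ ∈ ball b r →
    G x * F (k + y₀) = H (x + (k + y₀))}
  have hD : Dense D := hdense.preimage (Homeomorph.addRight y₀).isOpenMap
  have hcont₁ : Continuous fun k => G (x + k) * G a := by fun_prop
  have hcont₂ : Continuous fun k => G x * G (a + k) := by fun_prop
  refine Set.EqOn.of_subset_closure (s := ball (0 : E) (r / 2) ∩ D) ?_ hcont₁.continuousOn
    hcont₂.continuousOn Set.inter_subset_left (hD.open_subset_closure_inter isOpen_ball)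
  rintro k ⟨hk, hkD⟩
  rw [mem_ball_zero_iff] at hk
  have hkb : k + y₀ ∈ ball b r := by
    rw [mem_ball_iff_norm, add_sub_assoc]
    linarith [norm_add_le k (y₀ - b)]
  have hy₀b' : y₀ ∈ ball b r := by
    rw [mem_ball_iff_norm]
    linarith
  have hshift : ∀ᵐ u : E, u + k ∈ ball a r → y₀ ∈ ball b r →
      G (u + k) * F y₀ = H (u + k + y₀) :=
    (measurePreserving_add_right volume k).quasiMeasurePreserving.ae hy₀
  have hcont₃ : Continuous fun u => G (u + k) * F y₀ := by fun_prop
  have hcont₄ : Continuous fun u => G u * F (k + y₀) := by fun_prop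
  have key : Set.EqOn (fun u => G (u + k) * F y₀) (fun u => G u * F (k + y₀)) (ball a (r / 2)) := by
    refine Measure.eqOn_open_of_ae_eq (μ := volume) ?_ isOpen_ball hcont₃.continuousOn
      hcont₄.continuousOn
    rw [EventuallyEq, ae_restrict_iff' measurableSet_ball]
    filter_upwards [hshift, hkD] with u hu₁ hu₂ hu
    rw [mem_ball_iff_norm] at hu
    have hua : u ∈ ball a r := by
      rw [mem_ball_iff_norm]
      linarith
    have huka : u + k ∈ ball a r := by
      rw [mem_ball_iff_norm, add_sub_right_comm]
      linarith [norm_add_le (u - a) k]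
    rw [hu₁ huka hy₀b', hu₂ hua hkb, add_assoc]
  have hFy₀ : F y₀ ≠ 0 := fun h0 => by simpa [h0] using hF1 y₀
  have hx' : G (x + k) * F y₀ = G x * F (k + y₀) := key hx
  have ha' : G (a + k) * F y₀ = G a * F (k + y₀) := key (mem_ball_self hr2)
  apply mul_right_cancel₀ hFy₀
  linear_combination G a * hx' - G x * ha'

/-- A unimodular measurable solution of `F x * F y = H (x + y)` on a product of balls is an
exponential near the centre of the first ball. -/
theorem exists_exp_inner_of_ae_mul_eq {F H : E → ℂ} (hF : Measurable F)
    (hF1 : ∀ x, ‖F x‖ = 1) (hH : Measurable H) (hH1 : ∀ x, ‖H x‖ = 1) {a b : E} {r : ℝ}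
    (hr : 0 < r)
    (h : ∀ᵐ p : E × E, p.1 ∈ ball a r → p.2 ∈ ball b r → F p.1 * F p.2 = H (p.1 + p.2)) :
    ∃ (ξ : E) (c : ℂ), ‖c‖ = 1 ∧ ∀ᵐ x : E, x ∈ ball a (r / 2) →
      F x = c * Complex.exp (Complex.I * ((⟪x, ξ⟫ : ℝ) : ℂ)) := by
  obtain ⟨G, hG, hFG⟩ := exists_differentiable_ae_eq_of_mul_eq hF hF1 hH hH1 hr
    (Measure.ae_ae_of_ae_prod h)
  have hswap : ∀ᵐ y : E, ∀ᵐ x : E, x ∈ ball a r → y ∈ ball b r → F x * F y = H (x + y) :=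
    Measure.ae_ae_of_ae_prod (Measure.measurePreserving_swap.quasiMeasurePreserving.ae h)
  have hmul := mul_eq_mul_of_ae_mul_eq (a := a) (b := b) (H := H) hG.continuous hF1 hr (by
    filter_upwards [hswap] with y hy
    filter_upwards [hy, hFG] with x hx hFGx hxa hyb
    rw [← hFGx hxa, hx hxa hyb])
  have hnorm : Set.EqOn (fun x => ‖G x‖) (fun _ => 1) (ball a r) := by
    refine Measure.eqOn_open_of_ae_eq (μ := volume) ?_ isOpen_ball
      hG.continuous.norm.continuousOn continuousOn_const
    rw [EventuallyEq, ae_restrict_iff' measurableSet_ball]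
    filter_upwards [hFG] with x hx hxa
    rw [← hx hxa, hF1]
  have hsub : ball a (r / 2) ⊆ ball a r := ball_subset_ball (by linarith)
  obtain ⟨ξ, c, hc, hexp⟩ := exists_exp_inner_of_local_mul hG (half_pos hr)
    (fun x hx => hnorm (hsub hx)) hmul
  refine ⟨ξ, c, hc, ?_⟩
  filter_upwards [hFG] with x hx hxa
  rw [hx (hsub hxa), hexp x hxa]

end Pexider

/-- **Separation of variables.** Let `ψ : B(0,2) → ℝ` be measurable and let
`z̄₁, z̄₂, z̄₃ ∈ ℝ³` with `z̄₄ := z̄₁ + z̄₂ - z̄₃` be such that all four points lie in `B(0,2)`.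
If on some neighborhood `U` of `(z̄₁, z̄₂, z̄₃)` one has
`e^{i[ψ(z₁)+ψ(z₂)]} = e^{i[ψ(z₃)+ψ(z₄)]}` (with `z₄ := z₁+z₂-z₃`) for Lebesgue-almost every
`(z₁,z₂,z₃) ∈ U`, then there exist `ξ ∈ ℝ³`, `c ∈ ℂ` with `|c| = 1`, and a neighborhood `V`
of `z̄₁` such that `e^{iψ(w)} = c e^{i w·ξ}` for Lebesgue-almost every `w ∈ V`. -/
theorem separate_variables (ψ : E3 → ℝ) (hψ : Measurable ψ)
    (z₁ z₂ z₃ : E3) (hz₁ : z₁ ∈ ball (0 : E3) 2) (hz₂ : z₂ ∈ ball (0 : E3) 2)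
    (hz₃ : z₃ ∈ ball (0 : E3) 2) (hz₄ : z₁ + z₂ - z₃ ∈ ball (0 : E3) 2)
    (hU : ∃ U ∈ nhds (z₁, z₂, z₃),
      ∀ᵐ p : E3 × E3 × E3 ∂volume, p ∈ U →
        Complex.exp (Complex.I * ((ψ p.1 + ψ p.2.1 : ℝ) : ℂ))
          = Complex.exp (Complex.I * ((ψ p.2.2 + ψ (p.1 + p.2.1 - p.2.2) : ℝ) : ℂ))) :
    ∃ (ξ : E3) (c : ℂ), ‖c‖ = 1 ∧ ∃ V ∈ nhds z₁,
      ∀ᵐ w ∂(volume : Measure E3), w ∈ V →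
        Complex.exp (Complex.I * ((ψ w : ℝ) : ℂ))
          = c * Complex.exp (Complex.I * ((⟪w, ξ⟫ : ℝ) : ℂ)) := by
  obtain ⟨U, hU, hae⟩ := hU
  obtain ⟨r, hr, hrU⟩ := Metric.mem_nhds_iff.1 hU
  have hnorm : ∀ t : ℝ, ‖Complex.exp (Complex.I * (t : ℂ))‖ = 1 :=
    Complex.norm_exp_I_mul_ofReal
  set F : E3 → ℂ := fun x => Complex.exp (Complex.I * (ψ x : ℂ)) with hFdef
  have hF : Measurable F := by fun_prop
  have hperm : MeasurePreserving (fun q : E3 × E3 × E3 => (q.2.1, q.2.2, q.1)) := by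
    have h₁ : MeasurePreserving (Prod.swap : E3 × E3 × E3 → (E3 × E3) × E3) :=
      Measure.measurePreserving_swap
    exact volume_preserving_prodAssoc.comp h₁
  have hslices := Measure.ae_ae_of_ae_prod (hperm.quasiMeasurePreserving.ae hae)
  obtain ⟨z, hz, hzr⟩ := (Measure.dense_of_ae hslices).exists_mem_open isOpen_ball
    ⟨z₃, mem_ball_self hr⟩
  have hH : Measurable fun s => F z * F (s - z) := by fun_prop
  obtain ⟨ξ, c, hc, hexp⟩ := exists_exp_inner_of_ae_mul_eq (a := z₁) (b := z₂) (r := r)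
    hF (fun x => hnorm _) hH (fun s => by simp [hFdef, hnorm]) hr (by
      filter_upwards [hz] with p hp hp₁ hp₂
      have hmem : (p.1, p.2, z) ∈ U := hrU (by
        rw [← ball_prod_same, ← ball_prod_same]
        exact ⟨hp₁, hp₂, hzr⟩)
      simpa [hFdef, mul_add, Complex.exp_add] using hp hmem)
  exact ⟨ξ, c, hc, ball z₁ (r / 2), ball_mem_nhds _ (half_pos hr), hexp⟩

end
end

section
/- Let x₁,…,x₄, y₁,…,y₄ ∈ S² satisfy x_j ≠ ±y_j for all j ∈ {1,2,3,4}, and suppose span{x₁,y₁}^⊥ + span{x₂,y₂}^⊥ + span{x₃,y₃}^⊥ + span{x₄,y₄}^⊥ = ℝ³. Then for every (w₁,w₂,w₃,w₄) ∈ (ℝ³)⁴ with w₁ + w₂ = w₃ + w₄, there exist u₁,…,u₄, v₁,…,v₄ ∈ ℝ³ such that u_j ⊥ x_j and v_j ⊥ y_j for all j, u_j + v_j = w_j for all j, u₁ + u₂ = v₃ + v₄, and v₁ + v₂ = u₃ + u₄. -/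
open MeasureTheory Metric Filter
open scoped ENNReal RealInnerProductSpace

noncomputable section

/-- For unit vectors `x ≠ ±y`, every vector `w` is the sum of a vector orthogonal to `x` and a
vector orthogonal to `y`. -/
lemma exists_inner_eq_zero_inner_sub_eq_zero {E : Type*} [NormedAddCommGroup E]
    [InnerProductSpace ℝ E] {x y : E} (hx : ‖x‖ = 1) (hy : ‖y‖ = 1) (h : x ≠ y) (h' : x ≠ -y)
    (w : E) : ∃ u : E, ⟪u, x⟫ = 0 ∧ ⟪w - u, y⟫ = 0 := by
  have h1 : ⟪x, y⟫ ≠ 1 := fun hc => h ((inner_eq_one_iff_of_norm_eq_one hx hy).1 hc)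
  have h2 : ⟪x, -y⟫ ≠ 1 := fun hc =>
    h' ((inner_eq_one_iff_of_norm_eq_one hx (by rwa [norm_neg])).1 hc)
  rw [inner_neg_right] at h2
  have h3 : 1 - ⟪x, y⟫ * ⟪x, y⟫ ≠ 0 := by
    intro hc
    rcases mul_self_eq_one_iff.1 (sub_eq_zero.1 hc).symm with h | h
    · exact h1 h
    · exact h2 (by rw [h, neg_neg])
  have hxx : ⟪x, x⟫ = 1 := by rw [real_inner_self_eq_norm_sq, hx, one_pow]
  have hyy : ⟪y, y⟫ = 1 := by rw [real_inner_self_eq_norm_sq, hy, one_pow]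
  refine ⟨(⟪w, y⟫ / (1 - ⟪x, y⟫ * ⟪x, y⟫)) • (y - ⟪x, y⟫ • x), ?_, ?_⟩
  · rw [real_inner_smul_left, inner_sub_left, real_inner_smul_left, hxx, real_inner_comm x y]
    ring
  · rw [inner_sub_left, real_inner_smul_left, inner_sub_left, real_inner_smul_left, hyy,
      div_mul_cancel₀ _ h3, sub_self]

/-- **Surjectivity of the linearization (submersion property).** Let
`x₁,…,x₄, y₁,…,y₄ ∈ S²` satisfy `x_j ≠ ±y_j` for all `j`, and suppose
`span{x₁,y₁}^⊥ + span{x₂,y₂}^⊥ + span{x₃,y₃}^⊥ + span{x₄,y₄}^⊥ = ℝ³`.  Then for every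
`(w₁,…,w₄) ∈ (ℝ³)⁴` with `w₁ + w₂ = w₃ + w₄` there exist `u₁,…,u₄, v₁,…,v₄ ∈ ℝ³` with
`u_j ⊥ x_j`, `v_j ⊥ y_j`, `u_j + v_j = w_j` for all `j`, `u₁+u₂ = v₃+v₄`, and
`v₁+v₂ = u₃+u₄`. -/
theorem submersion_linear_algebra (x y : Fin 4 → E3)
    (hx : ∀ j, x j ∈ sph) (hy : ∀ j, y j ∈ sph)
    (hne : ∀ j, x j ≠ y j ∧ x j ≠ -y j)
    (hspan : (Submodule.span ℝ {x 0, y 0})ᗮ ⊔ (Submodule.span ℝ {x 1, y 1})ᗮ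
        ⊔ (Submodule.span ℝ {x 2, y 2})ᗮ ⊔ (Submodule.span ℝ {x 3, y 3})ᗮ = ⊤)
    (w : Fin 4 → E3) (hw : w 0 + w 1 = w 2 + w 3) :
    ∃ u v : Fin 4 → E3,
      (∀ j, ⟪u j, x j⟫ = 0) ∧ (∀ j, ⟪v j, y j⟫ = 0) ∧
      (∀ j, u j + v j = w j) ∧
      u 0 + u 1 = v 2 + v 3 ∧ v 0 + v 1 = u 2 + u 3 := by
  have hex : ∀ j, ∃ a : E3, ⟪a, x j⟫ = 0 ∧ ⟪w j - a, y j⟫ = 0 := fun j =>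
    exists_inner_eq_zero_inner_sub_eq_zero (mem_sphere_zero_iff_norm.1 (hx j))
      (mem_sphere_zero_iff_norm.1 (hy j)) (hne j).1 (hne j).2 (w j)
  choose a ha hb using hex
  have hmem : w 2 + w 3 - (a 0 + a 1 + a 2 + a 3) ∈ (⊤ : Submodule ℝ E3) := Submodule.mem_top
  rw [← hspan] at hmem
  obtain ⟨s, hs, n₃, h₃, hs₃⟩ := Submodule.mem_sup.1 hmem
  obtain ⟨t, ht, n₂, h₂, rfl⟩ := Submodule.mem_sup.1 hs
  obtain ⟨n₀, h₀, n₁, h₁, rfl⟩ := Submodule.mem_sup.1 ht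
  let n : Fin 4 → E3 := ![n₀, n₁, n₂, n₃]
  have hn : ∀ j, n j ∈ (Submodule.span ℝ {x j, y j})ᗮ := by
    intro j
    fin_cases j
    exacts [h₀, h₁, h₂, h₃]
  have hnx : ∀ j, ⟪n j, x j⟫ = 0 := fun j =>
    Submodule.inner_left_of_mem_orthogonal (Submodule.subset_span (by simp)) (hn j)
  have hny : ∀ j, ⟪n j, y j⟫ = 0 := fun j =>
    Submodule.inner_left_of_mem_orthogonal (Submodule.subset_span (by simp)) (hn j)
  have hsum : n 0 + n 1 + n 2 + n 3 = w 2 + w 3 - (a 0 + a 1 + a 2 + a 3) := hs₃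
  clear_value n
  refine ⟨fun j => a j + n j, fun j => w j - a j - n j, fun j => ?_, fun j => ?_, fun j => ?_,
    ?_, ?_⟩
  · rw [inner_add_left, ha, hnx, add_zero]
  · rw [inner_sub_left, hb, hny, sub_zero]
  · module
  · linear_combination (norm := module) hsum
  · linear_combination (norm := module) hw - hsum

end
end

section
/- For any w₁, w₂ ∈ ℝ³ with 0 < |w₁| < 2 and 0 < |w₂| < 2, there exist points x₁,…,x₄, y₁,…,y₄ ∈ S² such that x₁ + y₁ = w₁, x₂ + y₂ = w₂, x₁ + x₂ = y₃ + y₄, x₃ + x₄ = y₁ + y₂, no two of the eight points x₁,…,x₄,y₁,…,y₄ are equal or antipodal, and span{x₁,y₁}^⊥ + span{x₂,y₂}^⊥ + span{x₃,y₃}^⊥ + span{x₄,y₄}^⊥ = ℝ³. -/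
open MeasureTheory Metric Filter
open scoped ENNReal RealInnerProductSpace

noncomputable section

/-- The cross product on `E3`. -/
def cross (a b : E3) : E3 :=
  !₂[a 1 * b 2 - a 2 * b 1, a 2 * b 0 - a 0 * b 2, a 0 * b 1 - a 1 * b 0]

lemma inner_eq_coords (a b : E3) : ⟪a, b⟫ = a 0 * b 0 + a 1 * b 1 + a 2 * b 2 := by
  simp [PiLp.inner_apply, Fin.sum_univ_three]
  ring

lemma inner_cross (a b z : E3) : ⟪cross a b, z⟫ =
    (a 1 * b 2 - a 2 * b 1) * z 0 + (a 2 * b 0 - a 0 * b 2) * z 1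
      + (a 0 * b 1 - a 1 * b 0) * z 2 := by
  simp [inner_eq_coords, cross]

lemma inner_cross_left (a b : E3) : ⟪cross a b, a⟫ = 0 := by
  rw [inner_cross]; ring

lemma inner_cross_right (a b : E3) : ⟪cross a b, b⟫ = 0 := by
  rw [inner_cross]; ring

lemma inner_cross_self (a b : E3) :
    ⟪cross a b, cross a b⟫ = ⟪a, a⟫ * ⟪b, b⟫ - ⟪a, b⟫ ^ 2 := by
  simp only [inner_eq_coords, cross, Matrix.cons_val]
  ring

/-- A vector orthogonal to three vectors with nonzero determinant vanishes. -/
lemma eq_zero_of_inner_eq_zero {a b c z : E3} (h : ⟪cross a b, c⟫ ≠ 0)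
    (ha : ⟪a, z⟫ = 0) (hb : ⟪b, z⟫ = 0) (hc : ⟪c, z⟫ = 0) : z = 0 := by
  rw [inner_cross] at h
  rw [inner_eq_coords] at ha hb hc
  ext i
  apply mul_left_cancel₀ h
  fin_cases i
  · simp only [Fin.zero_eta, PiLp.zero_apply]
    linear_combination (b 1 * c 2 - b 2 * c 1) * ha + (c 1 * a 2 - c 2 * a 1) * hb
      + (a 1 * b 2 - a 2 * b 1) * hc
  · simp only [Fin.mk_one, PiLp.zero_apply]
    linear_combination (b 2 * c 0 - b 0 * c 2) * ha + (c 2 * a 0 - c 0 * a 2) * hb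
      + (a 2 * b 0 - a 0 * b 2) * hc
  · simp only [Fin.reduceFinMk, PiLp.zero_apply]
    linear_combination (b 0 * c 1 - b 1 * c 0) * ha + (c 0 * a 1 - c 1 * a 0) * hb
      + (a 0 * b 1 - a 1 * b 0) * hc

lemma cross_ne_zero_of_unit {x y : E3} (hx : ‖x‖ = 1) (hy : ‖y‖ = 1) (h : x ≠ y) (h' : x ≠ -y) :
    cross x y ≠ 0 := by
  intro h0
  have h1 := inner_cross_self x y
  simp only [h0, inner_zero_left, real_inner_self_eq_norm_sq, hx, hy] at h1
  have h2 : (⟪x, y⟫ - 1) * (⟪x, y⟫ + 1) = 0 := by linear_combination h1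
  rcases mul_eq_zero.1 h2 with h3 | h3
  · exact h ((inner_eq_one_iff_of_norm_eq_one (𝕜 := ℝ) hx hy).1 (by linarith))
  · exact h' ((inner_eq_one_iff_of_norm_eq_one (𝕜 := ℝ) hx (by simpa using hy)).1
      (by rw [inner_neg_right]; linarith))

lemma cross_ne_zero_of_inner {a b z : E3} (hza : ⟪a, z⟫ = 0) (hzb : ⟪b, z⟫ ≠ 0) (ha : a ≠ 0) :
    cross a b ≠ 0 := by
  intro h0
  have h1 : ⟪a, a⟫ * ⟪b, z⟫ = ⟪a, b⟫ * ⟪a, z⟫ := by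
    have e (i : Fin 3) : cross a b i = 0 := by simp [h0]
    have e0 := e 0
    have e1 := e 1
    have e2 := e 2
    simp only [cross, PiLp.toLp_apply, Matrix.cons_val] at e0 e1 e2
    simp only [inner_eq_coords]
    linear_combination (a 1 * z 2 - a 2 * z 1) * e0 + (a 2 * z 0 - a 0 * z 2) * e1
      + (a 0 * z 1 - a 1 * z 0) * e2
  rw [hza, mul_zero] at h1
  rcases mul_eq_zero.1 h1 with h | h
  · exact ha (inner_self_eq_zero.1 h)
  · exact hzb h

/-- The circle of unit vectors `x` such that `c - x` is also a unit vector. -/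
def splitCircle (c : E3) : Set E3 := {x | ‖x‖ = 1 ∧ ‖c - x‖ = 1}

lemma sub_mem_splitCircle {c x : E3} (hx : x ∈ splitCircle c) : c - x ∈ splitCircle c :=
  ⟨hx.2, by simpa using hx.1⟩

lemma inner_of_mem_splitCircle {c x : E3} (hx : x ∈ splitCircle c) : ⟪c, x⟫ = ‖c‖ ^ 2 / 2 := by
  have h := norm_sub_sq_real c x
  rw [hx.1, hx.2] at h
  linarith

lemma splitCircle_infinite {c : E3} (h0 : 0 < ‖c‖) (h2 : ‖c‖ < 2) : (splitCircle c).Infinite := by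
  have : Fact (Module.finrank ℝ E3 = 2 + 1) := ⟨by simp⟩
  have hd : Module.finrank ℝ (Submodule.span ℝ {c})ᗮ = 2 :=
    Submodule.finrank_orthogonal_span_singleton (norm_pos_iff.1 h0)
  let B := (stdOrthonormalBasis ℝ (Submodule.span ℝ {c})ᗮ).reindex (finCongr hd)
  have hc (i) : ⟪c, (B i : E3)⟫ = 0 := Submodule.mem_orthogonal_singleton_iff_inner_right.1 (B i).2
  have hB (i j) : ⟪(B i : E3), (B j : E3)⟫ = if i = j then 1 else 0 := by
    rw [← Submodule.coe_inner]; exact orthonormal_iff_ite.1 B.orthonormal i j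
  obtain ⟨e, f, hce, hcf, hee, hff, hef⟩ : ∃ e f : E3, ⟪c, e⟫ = 0 ∧ ⟪c, f⟫ = 0 ∧ ⟪e, e⟫ = 1 ∧
      ⟪f, f⟫ = 1 ∧ ⟪e, f⟫ = 0 :=
    ⟨B 0, B 1, hc 0, hc 1, by rw [hB, if_pos rfl], by rw [hB, if_pos rfl], by simp [hB]⟩
  set r := 1 - ‖c‖ ^ 2 / 4 with hr
  have hr0 : 0 < r := by nlinarith
  let g : ℝ → E3 := fun t => (2⁻¹ : ℝ) • c + t • e + √(r - t ^ 2) • f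
  have hec : ⟪e, c⟫ = 0 := by rw [real_inner_comm, hce]
  have hfc : ⟪f, c⟫ = 0 := by rw [real_inner_comm, hcf]
  have hfe : ⟪f, e⟫ = 0 := by rw [real_inner_comm, hef]
  have hge (t) : ⟪e, g t⟫ = t := by
    simp only [g, inner_add_right, inner_smul_right, hec, hee, hef]
    ring
  have hgi : Function.Injective g := fun s t h => by rw [← hge s, h, hge]
  refine ((Set.Ioo_infinite (Real.sqrt_pos.2 hr0)).image hgi.injOn).mono ?_
  rintro _ ⟨t, ⟨ht0, ht1⟩, rfl⟩
  have ht : t ^ 2 < r := (Real.lt_sqrt ht0.le).1 ht1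
  have hs := Real.sq_sqrt (sub_pos.2 ht).le
  have hcg : ⟪c, g t⟫ = ‖c‖ ^ 2 / 2 := by
    simp [g, inner_add_right, inner_smul_right, hce, hcf]
    ring
  have hg : ‖g t‖ ^ 2 = 1 := by
    rw [← real_inner_self_eq_norm_sq]
    simp only [g, inner_add_right, inner_add_left, inner_smul_right, real_inner_smul_left,
      hce, hcf, hec, hfc, hee, hff, hef, hfe, real_inner_self_eq_norm_sq]
    linear_combination hs
  have hcs : ‖c - g t‖ ^ 2 = 1 := by
    rw [norm_sub_sq_real, hcg, hg]; ring
  exact ⟨(pow_eq_one_iff_of_nonneg (norm_nonneg _) two_ne_zero).1 hg,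
    (pow_eq_one_iff_of_nonneg (norm_nonneg _) two_ne_zero).1 hcs⟩

/-- A plane through the origin meets `splitCircle c` in finitely many points. -/
lemma finite_splitCircle_inter {c m : E3} (h0 : 0 < ‖c‖) (hm : m ≠ 0) :
    (splitCircle c ∩ {x | ⟪m, x⟫ = 0}).Finite := by
  by_cases hd : cross c m = 0
  · convert Set.finite_empty
    refine Set.eq_empty_of_forall_notMem fun x hx => ?_
    have hmc : cross m c ≠ 0 := by
      refine cross_ne_zero_of_inner hx.2 ?_ hm
      rw [inner_of_mem_splitCircle hx.1]
      positivity
    apply hmc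
    have e (i : Fin 3) : cross c m i = 0 := by simp [hd]
    have e0 := e 0
    have e1 := e 1
    have e2 := e 2
    simp only [cross, PiLp.toLp_apply, Matrix.cons_val] at e0 e1 e2
    ext i
    fin_cases i <;> simp [cross] <;> linarith
  · have hdd : ⟪cross c m, cross c m⟫ ≠ 0 := inner_self_ne_zero.2 hd
    refine Set.Finite.of_finite_image (f := fun x => ⟪cross c m, x⟫) ?_ ?_
    · set G := ‖c‖ ^ 2 * ‖m‖ ^ 2 - ⟪c, m⟫ ^ 2 - ‖m‖ ^ 2 * (‖c‖ ^ 2 / 2) ^ 2 with hG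
      refine (Set.toFinite {√G, -√G}).subset ?_
      rintro _ ⟨x, ⟨hx, hmx⟩, rfl⟩
      have hmx : ⟪m, x⟫ = 0 := hmx
      have hcx := inner_of_mem_splitCircle hx
      have hxx : ⟪x, x⟫ = 1 := by rw [real_inner_self_eq_norm_sq, hx.1]; norm_num
      have gram : ⟪cross c m, x⟫ ^ 2 = ⟪c, c⟫ * ⟪m, m⟫ * ⟪x, x⟫ + 2 * ⟪c, m⟫ * ⟪m, x⟫ * ⟪c, x⟫
          - ⟪c, c⟫ * ⟪m, x⟫ ^ 2 - ⟪m, m⟫ * ⟪c, x⟫ ^ 2 - ⟪x, x⟫ * ⟪c, m⟫ ^ 2 := by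
        rw [inner_cross]
        simp only [inner_eq_coords]
        ring
      have hsq : ⟪cross c m, x⟫ ^ 2 = G := by
        rw [gram, hmx, hcx, hxx, real_inner_self_eq_norm_sq, real_inner_self_eq_norm_sq, hG]
        ring
      have hG0 : √G ^ 2 = G := Real.sq_sqrt (hsq ▸ sq_nonneg _)
      exact sq_eq_sq_iff_eq_or_eq_neg.1 (hsq.trans hG0.symm)
    · rintro x ⟨hx, hmx⟩ x' ⟨hx', hmx'⟩ h
      have hmx : ⟪m, x⟫ = 0 := hmx
      have hmx' : ⟪m, x'⟫ = 0 := hmx'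
      have h : ⟪cross c m, x⟫ = ⟪cross c m, x'⟫ := h
      refine sub_eq_zero.1 (eq_zero_of_inner_eq_zero hdd ?_ ?_ ?_)
      · rw [inner_sub_right, inner_of_mem_splitCircle hx, inner_of_mem_splitCircle hx', sub_self]
      · rw [inner_sub_right, hmx, hmx', sub_self]
      · rw [inner_sub_right, h, sub_self]

/-- A vector of norm strictly between `0` and `2` is a sum of two unit vectors avoiding
finitely many given planes through the origin. -/
lemma exists_mem_splitCircle_inner_ne_zero {c : E3} (h0 : 0 < ‖c‖) (h2 : ‖c‖ < 2)
    {M : Set E3} (hM : M.Finite) (hM0 : ∀ m ∈ M, m ≠ 0) :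
    ∃ x ∈ splitCircle c, ∀ m ∈ M, ⟪m, x⟫ ≠ 0 ∧ ⟪m, c - x⟫ ≠ 0 := by
  let S : E3 → Set E3 := fun m => splitCircle c ∩ {x | ⟪m, x⟫ = 0}
  have hfin : (⋃ m ∈ M, S m ∪ (fun x => c - x) ⁻¹' S m).Finite :=
    hM.biUnion fun m hm => (finite_splitCircle_inter h0 (hM0 m hm)).union
      ((finite_splitCircle_inter h0 (hM0 m hm)).preimage sub_right_injective.injOn)
  obtain ⟨x, hx, hx'⟩ := ((splitCircle_infinite h0 h2).sdiff hfin).nonempty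
  refine ⟨x, hx, fun m hm => ⟨fun h => hx' ?_, fun h => hx' ?_⟩⟩
  · exact Set.mem_biUnion hm (Or.inl ⟨hx, h⟩)
  · exact Set.mem_biUnion hm (Or.inr ⟨sub_mem_splitCircle hx, h⟩)

lemma splitCircle_ne {c x : E3} (h0 : 0 < ‖c‖) (h2 : ‖c‖ < 2) (hx : x ∈ splitCircle c) :
    x ≠ c - x ∧ x ≠ -(c - x) := by
  constructor
  · intro h
    have hc : c = (2 : ℝ) • x := by rw [two_smul]; nth_rw 2 [h]; abel
    rw [hc, norm_smul, hx.1] at h2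
    norm_num at h2
  · intro h
    have hc : c = 0 := by simpa [eq_sub_iff_add_eq] using h
    simp [hc] at h0

lemma norm_add_bounds {x y : E3} (hx : ‖x‖ = 1) (hy : ‖y‖ = 1) (h : x ≠ y) (h' : x ≠ -y) :
    0 < ‖x + y‖ ∧ ‖x + y‖ < 2 := by
  refine ⟨norm_pos_iff.2 fun h0 => h' (eq_neg_of_add_eq_zero_left h0), ?_⟩
  have h1 := norm_add_sq_real x y
  have h2 := norm_sub_sq_real x y
  have h3 : 0 < ‖x - y‖ := norm_pos_iff.2 (sub_ne_zero.2 h)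
  rw [hx, hy] at h1 h2
  nlinarith [norm_nonneg (x + y)]

lemma ne_of_inner_cross_ne_zero {a b z : E3} (h : ⟪cross a b, z⟫ ≠ 0) :
    (z ≠ a ∧ z ≠ -a) ∧ (z ≠ b ∧ z ≠ -b) ∧ (a ≠ z ∧ a ≠ -z) ∧ (b ≠ z ∧ b ≠ -z) := by
  have ha : z ≠ a := by rintro rfl; exact h (inner_cross_left _ _)
  have ha' : z ≠ -a := by rintro rfl; exact h (by rw [inner_neg_right, inner_cross_left, neg_zero])
  have hb : z ≠ b := by rintro rfl; exact h (inner_cross_right _ _)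
  have hb' : z ≠ -b := by rintro rfl; exact h (by rw [inner_neg_right, inner_cross_right, neg_zero])
  exact ⟨⟨ha, ha'⟩, ⟨hb, hb'⟩, ⟨ha.symm, fun e => ha' (by rw [e, neg_neg])⟩,
    ⟨hb.symm, fun e => hb' (by rw [e, neg_neg])⟩⟩

lemma inner_cross_of_mem_span {a b v : E3} (hv : v ∈ Submodule.span ℝ {a, b}) :
    ⟪cross a b, v⟫ = 0 := by
  obtain ⟨s, t, rfl⟩ := Submodule.mem_span_pair.1 hv
  simp [inner_add_right, inner_smul_right, inner_cross_left, inner_cross_right]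

lemma sup_orthogonal_eq_top {K₁ K₂ K₃ : Submodule ℝ E3} (h : ∀ v ∈ K₁, v ∈ K₂ → v ∈ K₃ → v = 0) :
    K₁ᗮ ⊔ K₂ᗮ ⊔ K₃ᗮ = ⊤ := by
  rw [← Submodule.orthogonal_eq_bot_iff, Submodule.eq_bot_iff]
  intro v hv
  simp only [← Submodule.inf_orthogonal, Submodule.orthogonal_orthogonal] at hv
  exact h v hv.1.1 hv.1.2 hv.2

/-- **Existence of good configurations above any pair of base points.** For any
`w₁, w₂ ∈ ℝ³` with `0 < |w₁| < 2` and `0 < |w₂| < 2` there exist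
`x₁,…,x₄, y₁,…,y₄ ∈ S²` with `x₁+y₁ = w₁`, `x₂+y₂ = w₂`, `x₁+x₂ = y₃+y₄`,
`x₃+x₄ = y₁+y₂`, such that no two of the eight points are equal or antipodal and
`span{x₁,y₁}^⊥ + span{x₂,y₂}^⊥ + span{x₃,y₃}^⊥ + span{x₄,y₄}^⊥ = ℝ³`. -/
theorem exists_good_configuration (w₁ w₂ : E3)
    (hw₁ : 0 < ‖w₁‖) (hw₁' : ‖w₁‖ < 2) (hw₂ : 0 < ‖w₂‖) (hw₂' : ‖w₂‖ < 2) :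
    ∃ x y : Fin 4 → E3,
      (∀ j, x j ∈ sph) ∧ (∀ j, y j ∈ sph) ∧
      x 0 + y 0 = w₁ ∧ x 1 + y 1 = w₂ ∧
      x 0 + x 1 = y 2 + y 3 ∧ x 2 + x 3 = y 0 + y 1 ∧
      (∀ i j : Fin 4, i ≠ j → x i ≠ x j ∧ x i ≠ -x j) ∧
      (∀ i j : Fin 4, i ≠ j → y i ≠ y j ∧ y i ≠ -y j) ∧
      (∀ i j : Fin 4, x i ≠ y j ∧ x i ≠ -y j) ∧
      (Submodule.span ℝ {x 0, y 0})ᗮ ⊔ (Submodule.span ℝ {x 1, y 1})ᗮ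
        ⊔ (Submodule.span ℝ {x 2, y 2})ᗮ ⊔ (Submodule.span ℝ {x 3, y 3})ᗮ = ⊤ := by
  obtain ⟨x₀, hx₀⟩ := (splitCircle_infinite hw₁ hw₁').nonempty
  obtain ⟨y₀, hy₀⟩ : ∃ y₀, y₀ = w₁ - x₀ := ⟨_, rfl⟩
  have hxy₀ := splitCircle_ne hw₁ hw₁' hx₀
  rw [splitCircle, Set.mem_ofPred_eq] at hx₀
  rw [← hy₀] at hxy₀ hx₀
  obtain ⟨n₀, hn₀⟩ : ∃ n, n = cross x₀ y₀ := ⟨_, rfl⟩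
  have hn₀' : n₀ ≠ 0 := hn₀ ▸ cross_ne_zero_of_unit hx₀.1 hx₀.2 hxy₀.1 hxy₀.2
  obtain ⟨x₁, hx₁, hx₁n⟩ := exists_mem_splitCircle_inner_ne_zero hw₂ hw₂'
    (Set.toFinite {n₀}) (by simpa using hn₀')
  obtain ⟨y₁, hy₁⟩ : ∃ y₁, y₁ = w₂ - x₁ := ⟨_, rfl⟩
  have hxy₁ := splitCircle_ne hw₂ hw₂' hx₁
  rw [splitCircle, Set.mem_ofPred_eq] at hx₁
  rw [← hy₁] at hxy₁ hx₁ hx₁n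
  obtain ⟨hx₁0, hy₁0⟩ := hx₁n n₀ rfl
  obtain ⟨n₁, hn₁⟩ : ∃ n, n = cross x₁ y₁ := ⟨_, rfl⟩
  have hn₁' : n₁ ≠ 0 := hn₁ ▸ cross_ne_zero_of_unit hx₁.1 hx₁.2 hxy₁.1 hxy₁.2
  obtain ⟨m, hm⟩ : ∃ m, m = cross n₁ n₀ := ⟨_, rfl⟩
  have hm0 : m ≠ 0 := hm ▸ cross_ne_zero_of_inner (hn₁ ▸ inner_cross_left x₁ y₁) hx₁0 hn₁'
  have hmn : ⟪m, n₀⟫ = 0 := hm ▸ inner_cross_right n₁ n₀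
  have X1 := ne_of_inner_cross_ne_zero (hn₀ ▸ hx₁0)
  have Y1 := ne_of_inner_cross_ne_zero (hn₀ ▸ hy₁0)
  obtain ⟨ha, ha'⟩ := norm_add_bounds hx₀.1 hx₁.1 X1.2.2.1.1 X1.2.2.1.2
  obtain ⟨hb, hb'⟩ := norm_add_bounds hx₀.2 hx₁.2 Y1.2.2.2.1 Y1.2.2.2.2
  obtain ⟨y₂, hy₂, hy₂n⟩ := exists_mem_splitCircle_inner_ne_zero ha ha'
    (Set.toFinite {n₀, n₁}) (by simp [hn₀', hn₁'])
  obtain ⟨y₃, hy₃⟩ : ∃ y₃, y₃ = x₀ + x₁ - y₂ := ⟨_, rfl⟩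
  have hyy := splitCircle_ne ha ha' hy₂
  rw [splitCircle, Set.mem_ofPred_eq] at hy₂
  rw [← hy₃] at hyy hy₂ hy₂n
  obtain ⟨hy₂0, hy₃0⟩ := hy₂n n₀ (by simp)
  obtain ⟨hy₂1, hy₃1⟩ := hy₂n n₁ (by simp)
  obtain ⟨k, hk⟩ : ∃ k, k = cross y₂ y₃ := ⟨_, rfl⟩
  have hk0 : k ≠ 0 := hk ▸ cross_ne_zero_of_unit hy₂.1 hy₂.2 hyy.1 hyy.2
  obtain ⟨l, hl⟩ : ∃ l, l = cross m y₂ := ⟨_, rfl⟩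
  have hl0 : l ≠ 0 := hl ▸ cross_ne_zero_of_inner hmn (by rwa [real_inner_comm]) hm0
  obtain ⟨x₂, hx₂, hx₂n⟩ := exists_mem_splitCircle_inner_ne_zero hb hb'
    (Set.toFinite {n₀, n₁, k, l}) (by simp [hn₀', hn₁', hk0, hl0])
  obtain ⟨x₃, hx₃⟩ : ∃ x₃, x₃ = y₀ + y₁ - x₂ := ⟨_, rfl⟩
  have hxx := splitCircle_ne hb hb' hx₂
  rw [splitCircle, Set.mem_ofPred_eq] at hx₂
  rw [← hx₃] at hxx hx₂ hx₂n
  obtain ⟨hx₂0, hx₃0⟩ := hx₂n n₀ (by simp)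
  obtain ⟨hx₂1, hx₃1⟩ := hx₂n n₁ (by simp)
  obtain ⟨hx₂k, hx₃k⟩ := hx₂n k (by simp)
  have hx₂l := (hx₂n l (by simp)).1
  have Y2 := ne_of_inner_cross_ne_zero (hn₀ ▸ hy₂0)
  have Y2' := ne_of_inner_cross_ne_zero (hn₁ ▸ hy₂1)
  have Y3 := ne_of_inner_cross_ne_zero (hn₀ ▸ hy₃0)
  have Y3' := ne_of_inner_cross_ne_zero (hn₁ ▸ hy₃1)
  have X2 := ne_of_inner_cross_ne_zero (hn₀ ▸ hx₂0)
  have X2' := ne_of_inner_cross_ne_zero (hn₁ ▸ hx₂1)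
  have X2k := ne_of_inner_cross_ne_zero (hk ▸ hx₂k)
  have X3 := ne_of_inner_cross_ne_zero (hn₀ ▸ hx₃0)
  have X3' := ne_of_inner_cross_ne_zero (hn₁ ▸ hx₃1)
  have X3k := ne_of_inner_cross_ne_zero (hk ▸ hx₃k)
  have hyy' : y₃ ≠ y₂ ∧ y₃ ≠ -y₂ := ⟨hyy.1.symm, fun e => hyy.2 (by rw [e, neg_neg])⟩
  have hxx' : x₃ ≠ x₂ ∧ x₃ ≠ -x₂ := ⟨hxx.1.symm, fun e => hxx.2 (by rw [e, neg_neg])⟩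
  refine ⟨![x₀, x₁, x₂, x₃], ![y₀, y₁, y₂, y₃], ?_, ?_, ?_, ?_, ?_, ?_, ?_, ?_, ?_, ?_⟩
  · simp [Fin.forall_fin_succ, sph, hx₀.1, hx₁.1, hx₂.1, hx₂.2]
  · simp [Fin.forall_fin_succ, sph, hx₀.2, hx₁.2, hy₂.1, hy₂.2]
  · simp [hy₀]
  · simp [hy₁]
  · simp [hy₃]
  · simp [hx₃]
  · intro i j hij
    fin_cases i <;> fin_cases j <;> first | exact absurd rfl hij | skip
    exacts [X1.2.2.1, X2.2.2.1, X3.2.2.1, X1.1, X2'.2.2.1, X3'.2.2.1, X2.1, X2'.1, hxx,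
      X3.1, X3'.1, hxx']
  · intro i j hij
    fin_cases i <;> fin_cases j <;> first | exact absurd rfl hij | skip
    exacts [Y1.2.2.2, Y2.2.2.2, Y3.2.2.2, Y1.2.1, Y2'.2.2.2, Y3'.2.2.2, Y2.2.1, Y2'.2.1, hyy,
      Y3.2.1, Y3'.2.1, hyy']
  · intro i j
    fin_cases i <;> fin_cases j
    exacts [hxy₀, Y1.2.2.1, Y2.2.2.1, Y3.2.2.1, X1.2.1, hxy₁, Y2'.2.2.1, Y3'.2.2.1,
      X2.2.1, X2'.2.1, X2k.1, X2k.2.1, X3.2.1, X3'.2.1, X3k.1, X3k.2.1]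
  · refine eq_top_iff.2 (le_trans ?_ le_sup_left)
    refine (sup_orthogonal_eq_top fun v h₀ h₁ h₂ => ?_).ge
    refine eq_zero_of_inner_eq_zero (a := n₁) (b := n₀) (c := cross y₂ x₂) ?_
      (hn₁ ▸ inner_cross_of_mem_span h₁) (hn₀ ▸ inner_cross_of_mem_span h₀)
      (inner_cross_of_mem_span (by rw [Set.pair_comm]; exact h₂))
    rw [← hm]
    rw [hl] at hx₂l
    convert hx₂l using 1
    rw [inner_cross, inner_eq_coords]
    simp only [cross, PiLp.toLp_apply, Matrix.cons_val]
    ring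

end
end
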